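/- arXiv:2303.10467 — 3 statements merged into one kernel-verified Lean document; each statement's English description precedes it below -/
import Mathlib

section
/- Suppose λ_0, …, λ_{ns−1} are pairwise distinct and satisfy the local constraints. Then the array code C is an (n,k,ℓ) MDS array code: for every subset F = {f_1 < … < f_r} ⊆ {0,…,n−1} of size r, the rℓ × rℓ matrix [H_{f_1} | … | H_{f_r}], where H_{a(s+1)+b} = A_{a,b}^(r), is invertible; equivalently, any two codewords of C that agree on all coordinates outside F are equal, so any k coordinates of a codeword determine the whole codeword. -/
open Matrix

/-- The `u`-th digit of `i` in base `s`. -/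
def digit (s i u : ℕ) : ℕ := i / s ^ u % s

open scoped Classical in
/-- The `z`-th entry of the `(i,j)` block (a length-`t` column vector, `0 ≤ z < t`) of the
block matrix `A_{a,b}^{(t)}`; the group size is `g` (`g = s` for the first construction and
`g = s + 1` for the second), so the relevant `λ`-index is `a·s·g + b·s + j_a`. -/
noncomputable def Aent {F : Type*} [Field F] (lam : ℕ → F) (s g a b i j z : ℕ) : F :=
  if i = j then lam (a * s * g + b * s + digit s j a) ^ z
  else if digit s i a = b ∧ digit s j a ≠ b ∧ (∀ u, u ≠ a → digit s i u = digit s j u) then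
    -(lam (a * s * g + b * s + digit s j a) ^ z)
  else 0

/-- `A_{a,b}^{(t)}` as an `ℓt × ℓ` matrix; row `ρ` encodes block row `ρ / t` and
inner row `ρ % t`. -/
noncomputable def Amat {F : Type*} [Field F] (lam : ℕ → F) (s g ℓ a b t : ℕ) :
    Matrix (Fin (ℓ * t)) (Fin ℓ) F :=
  Matrix.of fun ρ j => Aent lam s g a b ((ρ : ℕ) / t) (j : ℕ) ((ρ : ℕ) % t)

/-- The `m`-th smallest element of the finite set `B ⊆ ℕ` (junk value `0` if `m ≥ |B|`). -/
def enum (B : Finset ℕ) (m : ℕ) : ℕ := (B.sort (· ≤ ·)).getD m 0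

/-- `A_{a,B}^{(t)} = [A_{a,b₁}^{(t)} | ⋯ | A_{a,b_v}^{(t)}]` as an `ℓt × ℓ|B|` matrix:
row `ρ` encodes block row `ρ / t` and inner row `ρ % t`; column `κ` selects the
`κ / ℓ`-th member of `B` and inner column `κ % ℓ`. -/
noncomputable def AmatB {F : Type*} [Field F] (lam : ℕ → F) (s g ℓ a t : ℕ) (B : Finset ℕ) :
    Matrix (Fin (ℓ * t)) (Fin (ℓ * B.card)) F :=
  Matrix.of fun ρ κ =>
    Aent lam s g a (enum B ((κ : ℕ) / ℓ)) ((ρ : ℕ) / t) ((κ : ℕ) % ℓ) ((ρ : ℕ) % t)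

/-- The local (in-group) constraints: every square matrix `A_{a,B}` (for a group index
`a < groups` and a nonempty `B ⊆ {0, …, g-1}`) is invertible. -/
def LocalConstraints {F : Type*} [Field F] (lam : ℕ → F) (s g ℓ groups : ℕ) : Prop :=
  ∀ a < groups, ∀ B ⊆ Finset.range g, B.Nonempty → (AmatB lam s g ℓ a B.card B).det ≠ 0

/-- The horizontal concatenation `[H_{f 0} | H_{f 1} | ⋯ | H_{f (r-1)}]` of `r` parity check
matrices (each `H_{a·g+b} = A_{a,b}^{(r)}`, of size `ℓr × ℓ`), as an `ℓr × ℓr` square matrix. -/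
noncomputable def Hcat {F : Type*} [Field F] (lam : ℕ → F) (s g ℓ r : ℕ) (f : ℕ → ℕ) :
    Matrix (Fin (ℓ * r)) (Fin (ℓ * r)) F :=
  Matrix.of fun ρ κ =>
    Aent lam s g (f ((κ : ℕ) / ℓ) / g) (f ((κ : ℕ) / ℓ) % g)
      ((ρ : ℕ) / r) ((κ : ℕ) % ℓ) ((ρ : ℕ) % r)

/-- Membership in the array code: `(C_0, …, C_{n−1})` satisfies the parity check equations
`Σ_{a,b} A_{a,b}^{(r)} · C_{a·g+b} = 0` (node `m = a·g + b`). -/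
def InCode {F : Type*} [Field F] (lam : ℕ → F) (s g ℓ r n : ℕ) (C : ℕ → ℕ → F) : Prop :=
  ∀ ρ < ℓ * r, ∑ m ∈ Finset.range n, ∑ j ∈ Finset.range ℓ,
    Aent lam s g (m / g) (m % g) (ρ / r) j (ρ % r) * C m j = 0

/-!
Up to an invertible column operation, the blocks of the parity check matrix of a node are the powers
of one operator `Φ`, acting on a single tensor factor of `F ^ ℓ = (F ^ s) ^ ⊗(n / (s + 1))`. So the
claim is that a block Vandermonde matrix `[Φ_b ^ z]` has trivial kernel, and the local constraints
are this statement for the nodes of one group.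

A nonsingular block Vandermonde matrix of `v` nodes provides a monic polynomial `Q` of degree `v`
with operator coefficients that vanishes at each of them. An operator `T` that commutes with all the
nodes of `Q` also commutes with its coefficients, and `Q T` is injective as soon as all the
`Φ_b - T` are. Applying the linear recurrence `Q` to a dependency therefore removes the nodes of one
group and keeps the form of the dependency on the other groups, which gives an induction on the
groups. Operators of different groups act on different tensor factors, hence commute, and their
difference is injective because distinct `λ`s make their characteristic polynomials coprime.
-/

section BlockVandermonde

open Finset

variable {K V ι : Type*} [Ring K] [AddCommGroup V] [Module K V]

/-- The block Vandermonde matrix `[Φ b ^ z]`, with block rows `z < #B` and block columns `b ∈ B`,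
has trivial kernel. -/
def BlockVandermondeInjective (Φ : ι → Module.End K V) (B : Finset ι) : Prop :=
  ∀ c : ι → V, (∀ z < #B, ∑ b ∈ B, (Φ b ^ z) (c b) = 0) → ∀ b ∈ B, c b = 0

/-- The linear map of the block Vandermonde matrix `[Φ b ^ z]`, with block rows `z < #B` and block
columns `b ∈ B`. -/
def blockVandermonde (Φ : ι → Module.End K V) (B : Finset ι) : (B → V) →ₗ[K] (Fin #B → V) :=
  LinearMap.pi fun z ↦ ∑ b : B, (Φ b ^ (z : ℕ)) ∘ₗ LinearMap.proj b

lemma blockVandermonde_apply (Φ : ι → Module.End K V) (B : Finset ι) (c : B → V) (z : Fin #B) :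
    blockVandermonde Φ B c z = ∑ b : B, (Φ b ^ (z : ℕ)) (c b) := by
  simp [blockVandermonde]

/-- The value at `T` of the monic operator polynomial `X ^ v - ∑ i, p i * X ^ i`, whose lower
coefficients `p i : V → V` are encoded by the linear map `p = (p 0, …, p (v - 1)) : V ^ v → V`. -/
def monicEval {v : ℕ} (p : (Fin v → V) →ₗ[K] V) (T : Module.End K V) : Module.End K V :=
  T ^ v - p ∘ₗ LinearMap.pi fun i : Fin v ↦ T ^ (i : ℕ)

lemma monicEval_apply {v : ℕ} (p : (Fin v → V) →ₗ[K] V) (T : Module.End K V) (x : V) :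
    monicEval p T x = (T ^ v) x - p fun i ↦ (T ^ (i : ℕ)) x := rfl

lemma sum_monicEval_apply {v : ℕ} (p : (Fin v → V) →ₗ[K] V) (Φ : ι → Module.End K V) (S : Finset ι)
    (c : ι → V) : ∑ b ∈ S, monicEval p (Φ b) (c b) =
      ∑ b ∈ S, (Φ b ^ v) (c b) - p fun i ↦ ∑ b ∈ S, (Φ b ^ (i : ℕ)) (c b) := by
  simp only [monicEval_apply, sum_sub_distrib, ← map_sum]
  congr 2 with i
  exact Finset.sum_apply i S _

lemma map_sum_pow_apply {v : ℕ} {p : (Fin v → V) →ₗ[K] V} {Φ : ι → Module.End K V} {B : Finset ι}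
    (hp : ∀ b ∈ B, monicEval p (Φ b) = 0) (c : ι → V) :
    p (fun i ↦ ∑ b ∈ B, (Φ b ^ (i : ℕ)) (c b)) = ∑ b ∈ B, (Φ b ^ v) (c b) := by
  have h := sum_monicEval_apply p Φ B c
  rw [sum_eq_zero fun b hb ↦ by rw [hp b hb, LinearMap.zero_apply]] at h
  exact (sub_eq_zero.1 h.symm).symm

lemma commute_monicEval {v : ℕ} {p : (Fin v → V) →ₗ[K] V} {T : Module.End K V}
    (hT : ∀ w : Fin v → V, p (fun i ↦ T (w i)) = T (p w)) : Commute T (monicEval p T) := by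
  ext x
  have hpow (i : ℕ) : T ((T ^ i) x) = (T ^ i) (T x) := by
    rw [← Module.End.mul_apply, ← Module.End.mul_apply, ← pow_succ', pow_succ]
  simp only [Module.End.mul_apply, monicEval_apply, map_sub, ← hT, hpow]

namespace BlockVandermondeInjective

variable {Φ : ι → Module.End K V} {B : Finset ι}

lemma empty (Φ : ι → Module.End K V) : BlockVandermondeInjective Φ ∅ := by
  simp [BlockVandermondeInjective]

lemma congr {Ψ : ι → Module.End K V} (hB : BlockVandermondeInjective Φ B)
    (h : ∀ b ∈ B, Φ b = Ψ b) : BlockVandermondeInjective Ψ B := fun c hc ↦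
  hB c fun z hz ↦ (sum_congr rfl fun b hb ↦ by rw [h b hb]).trans (hc z hz)

lemma image_iff {κ : Type*} [DecidableEq ι] {e : κ → ι} {S : Finset κ} (he : Set.InjOn e S) :
    BlockVandermondeInjective Φ (S.image e) ↔ BlockVandermondeInjective (Φ ∘ e) S := by
  simp only [BlockVandermondeInjective, card_image_of_injOn he, sum_image he, forall_mem_image,
    Function.comp_apply]
  refine ⟨fun h c hc ↦ ?_, fun h c ↦ h (c ∘ e)⟩
  obtain ⟨c', hc'⟩ : ∃ c' : ι → V, ∀ b ∈ S, c' (e b) = c b := by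
    rcases S.eq_empty_or_nonempty with rfl | ⟨b₀, -⟩
    · simp
    · have : Nonempty κ := ⟨b₀⟩
      exact ⟨c ∘ Function.invFunOn e S, fun b hb ↦ congrArg c (he.leftInvOn_invFunOn hb)⟩
  intro b hb
  rw [← hc' b hb]
  exact h c' (fun z hz ↦ (sum_congr rfl fun b hb ↦ by rw [hc' b hb]).trans (hc z hz)) hb

lemma injective_blockVandermonde (hB : BlockVandermondeInjective Φ B) :
    Function.Injective (blockVandermonde Φ B) := by
  classical
  refine (injective_iff_map_eq_zero _).2 fun c hc ↦ funext fun b ↦ ?_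
  have h := hB (fun b ↦ if hb : b ∈ B then c ⟨b, hb⟩ else 0) (fun z hz ↦ ?_) b b.2
  · simpa using h
  · rw [← sum_coe_sort]
    simpa [blockVandermonde_apply] using congrFun hc ⟨z, hz⟩

end BlockVandermondeInjective

end BlockVandermonde

namespace BlockVandermondeInjective

open Finset

variable {K V ι : Type*} [DivisionRing K] [AddCommGroup V] [Module K V]
  {Φ : ι → Module.End K V} {B G : Finset ι}

lemma exists_monicEval_eq_zero (hB : BlockVandermondeInjective Φ B) :
    ∃ p : (Fin #B → V) →ₗ[K] V, ∀ b ∈ B, monicEval p (Φ b) = 0 := by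
  classical
  obtain ⟨W, hW⟩ := (blockVandermonde Φ B).exists_leftInverse_of_injective
    (LinearMap.ker_eq_bot.2 hB.injective_blockVandermonde)
  let top : (B → V) →ₗ[K] V := ∑ b : B, (Φ b ^ #B) ∘ₗ LinearMap.proj b
  refine ⟨top ∘ₗ W, fun b hb ↦ LinearMap.ext fun x ↦ ?_⟩
  have hcol : blockVandermonde Φ B (Pi.single ⟨b, hb⟩ x) = fun i : Fin #B ↦ (Φ b ^ (i : ℕ)) x := by
    ext i
    rw [blockVandermonde_apply, Fintype.sum_eq_single ⟨b, hb⟩ (by simp +contextual)]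
    simp
  have htop : top (Pi.single ⟨b, hb⟩ x) = (Φ b ^ #B) x := by
    simp only [top, LinearMap.sum_apply, LinearMap.comp_apply, LinearMap.proj_apply]
    rw [Fintype.sum_eq_single ⟨b, hb⟩ (by simp +contextual)]
    simp
  rw [monicEval_apply, ← hcol, LinearMap.comp_apply, ← LinearMap.comp_apply W, hW,
    LinearMap.id_apply, htop, sub_self, LinearMap.zero_apply]

variable [FiniteDimensional K V]

lemma exists_sum_pow_apply_eq (hB : BlockVandermondeInjective Φ B) (w : Fin #B → V) :
    ∃ c : ι → V, ∀ z : Fin #B, ∑ b ∈ B, (Φ b ^ (z : ℕ)) (c b) = w z := by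
  classical
  have hdim : Module.finrank K (B → V) = Module.finrank K (Fin #B → V) := by
    simp [Module.finrank_pi_fintype]
  obtain ⟨c, rfl⟩ := (LinearMap.injective_iff_surjective_of_finrank_eq_finrank hdim).1
    hB.injective_blockVandermonde w
  refine ⟨fun b ↦ if hb : b ∈ B then c ⟨b, hb⟩ else 0, fun z ↦ ?_⟩
  rw [← sum_coe_sort, blockVandermonde_apply]
  simp

lemma map_apply_of_commute (hB : BlockVandermondeInjective Φ B) {p : (Fin #B → V) →ₗ[K] V}
    (hp : ∀ b ∈ B, monicEval p (Φ b) = 0) {T : Module.End K V} (hT : ∀ b ∈ B, Commute T (Φ b))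
    (w : Fin #B → V) : p (fun i ↦ T (w i)) = T (p w) := by
  obtain ⟨c, hc⟩ := hB.exists_sum_pow_apply_eq w
  have hcomm (z : ℕ) : T (∑ b ∈ B, (Φ b ^ z) (c b)) = ∑ b ∈ B, (Φ b ^ z) (T (c b)) := by
    rw [map_sum]
    exact sum_congr rfl fun b hb ↦ LinearMap.congr_fun ((hT b hb).pow_right z).eq (c b)
  rw [← funext hc]
  simp only [hcomm, map_sum_pow_apply hp]

lemma injective_monicEval (hB : BlockVandermondeInjective Φ B) {p : (Fin #B → V) →ₗ[K] V}
    (hp : ∀ b ∈ B, monicEval p (Φ b) = 0) {T : Module.End K V} (hT : ∀ b ∈ B, Commute T (Φ b))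
    (hinj : ∀ b ∈ B, Function.Injective (Φ b - T)) : Function.Injective (monicEval p T) := by
  refine (injective_iff_map_eq_zero _).2 fun w hw ↦ ?_
  obtain ⟨c, hc⟩ := hB.exists_sum_pow_apply_eq fun i ↦ (T ^ (i : ℕ)) w
  have hsum : ∀ z ≤ #B, ∑ b ∈ B, (Φ b ^ z) (c b) = (T ^ z) w := by
    intro z hz
    rcases hz.lt_or_eq with hz | rfl
    · exact hc ⟨z, hz⟩
    · rw [← map_sum_pow_apply hp, funext hc]
      exact (sub_eq_zero.1 hw).symm
  have hc₀ : ∀ b ∈ B, c b = 0 := by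
    intro b hb
    refine (injective_iff_map_eq_zero _).1 (hinj b hb) _ ?_
    refine hB (fun b ↦ (Φ b - T) (c b)) (fun z hz ↦ ?_) b hb
    calc ∑ b ∈ B, (Φ b ^ z) ((Φ b - T) (c b))
        = ∑ b ∈ B, ((Φ b ^ (z + 1)) (c b) - T ((Φ b ^ z) (c b))) := sum_congr rfl fun b hb ↦ by
          rw [LinearMap.sub_apply, map_sub, pow_succ, Module.End.mul_apply]
          congr 1
          exact LinearMap.congr_fun ((hT b hb).pow_right z).eq.symm (c b)
      _ = (T ^ (z + 1)) w - T ((T ^ z) w) := by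
          rw [sum_sub_distrib, ← map_sum, hsum _ hz, hsum _ hz.le]
      _ = 0 := by rw [pow_succ', Module.End.mul_apply, sub_self]
  simpa [sum_eq_zero hc₀] using (hsum 0 (Nat.zero_le _)).symm

lemma union [DecidableEq ι] (hB : BlockVandermondeInjective Φ B)
    (hG : BlockVandermondeInjective Φ G) (hdisj : Disjoint B G)
    (hcomm : ∀ b ∈ B, ∀ m ∈ G, Commute (Φ m) (Φ b))
    (hinj : ∀ b ∈ B, ∀ m ∈ G, Function.Injective (Φ b - Φ m)) :
    BlockVandermondeInjective Φ (B ∪ G) := by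
  intro c hc
  rw [card_union_of_disjoint hdisj] at hc
  obtain ⟨p, hp⟩ := hB.exists_monicEval_eq_zero
  have hQ : ∀ m ∈ G, monicEval p (Φ m) (c m) = 0 := by
    refine hG _ fun z hz ↦ ?_
    calc ∑ m ∈ G, (Φ m ^ z) (monicEval p (Φ m) (c m))
        = ∑ m ∈ G, monicEval p (Φ m) ((Φ m ^ z) (c m)) := sum_congr rfl fun m hm ↦
          LinearMap.congr_fun ((commute_monicEval
            (hB.map_apply_of_commute hp (hcomm · · m hm))).pow_left z).eq (c m)
      _ = ∑ m ∈ B ∪ G, monicEval p (Φ m) ((Φ m ^ z) (c m)) := by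
          rw [sum_union hdisj, sum_eq_zero (s := B) fun b hb ↦ by rw [hp b hb]; rfl, zero_add]
      _ = ∑ m ∈ B ∪ G, (Φ m ^ (#B + z)) (c m) -
            p fun i ↦ ∑ m ∈ B ∪ G, (Φ m ^ (i + z)) (c m) := by
          simp only [sum_monicEval_apply, pow_add, Module.End.mul_apply]
      _ = 0 := by
          have hlow : (fun i : Fin #B ↦ ∑ m ∈ B ∪ G, (Φ m ^ (i + z)) (c m)) = 0 :=
            funext fun i ↦ hc _ (by omega)
          rw [hc _ (by omega), hlow, map_zero, sub_zero]
  have hcG : ∀ m ∈ G, c m = 0 := fun m hm ↦ (injective_iff_map_eq_zero _).1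
    (hB.injective_monicEval hp (hcomm · · m hm) (hinj · · m hm)) _ (hQ m hm)
  have hcB : ∀ b ∈ B, c b = 0 := by
    refine hB c fun z hz ↦ ?_
    have h := hc z (by omega)
    rwa [sum_union hdisj, sum_eq_zero (s := G) fun m hm ↦ by rw [hcG m hm, map_zero],
      add_zero] at h
  exact fun b hb ↦ (mem_union.1 hb).elim (hcB b) (hcG b)

lemma of_fibers {α : Type*} [DecidableEq α] {S : Finset ι} (grp : ι → α)
    (hgrp : ∀ a ∈ S.image grp, BlockVandermondeInjective Φ {b ∈ S | grp b = a})
    (hcomm : ∀ b ∈ S, ∀ m ∈ S, grp b ≠ grp m → Commute (Φ m) (Φ b))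
    (hinj : ∀ b ∈ S, ∀ m ∈ S, grp b ≠ grp m → Function.Injective (Φ b - Φ m)) :
    BlockVandermondeInjective Φ S := by
  classical
  suffices h : ∀ A ⊆ S.image grp, BlockVandermondeInjective Φ {b ∈ S | grp b ∈ A} by
    have hS : {b ∈ S | grp b ∈ S.image grp} = S :=
      filter_true_of_mem fun _ ↦ mem_image_of_mem grp
    exact hS ▸ h _ subset_rfl
  intro A
  induction A using Finset.induction_on with
  | empty => simpa using empty Φ
  | insert a A haA ih =>
    intro hA
    rw [insert_subset_iff] at hA
    have hne {b m : ι} (hb : b ∈ S.filter (grp · = a)) (hm : m ∈ S.filter (grp · ∈ A)) :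
        grp b ≠ grp m := by
      rw [(mem_filter.1 hb).2]
      exact fun h ↦ haA (h ▸ (mem_filter.1 hm).2)
    simp only [mem_insert, filter_or]
    refine (hgrp a hA.1).union (ih hA.2) ?_ (fun b hb m hm ↦ ?_) (fun b hb m hm ↦ ?_)
    · exact disjoint_left.2 fun b hb hb' ↦ hne hb hb' rfl
    · exact hcomm b (mem_filter.1 hb).1 m (mem_filter.1 hm).1 (hne hb hm)
    · exact hinj b (mem_filter.1 hb).1 m (mem_filter.1 hm).1 (hne hb hm)

end BlockVandermondeInjective

section TensorFactor

open Polynomial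

lemma injective_sub_of_commute_of_isCoprime {R V : Type*} [CommRing R] [AddCommGroup V] [Module R V]
    {S T : Module.End R V} (hST : Commute S T) {p q : R[X]} (hpq : IsCoprime p q)
    (hp : aeval S p = 0) (hq : aeval T q = 0) : Function.Injective (S - T) := by
  refine (injective_iff_map_eq_zero _).2 fun x hx ↦ ?_
  have heq : S x = T x := sub_eq_zero.1 hx
  have hpow (k : ℕ) : (S ^ k) x = (T ^ k) x := by
    induction k with
    | zero => rfl
    | succ k ih =>
      rw [pow_succ, pow_succ', Module.End.mul_apply, Module.End.mul_apply, heq, ← ih]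
      exact LinearMap.congr_fun (hST.pow_left k).eq x
  have haeval : aeval S p x = aeval T p x := by
    simp only [aeval_eq_sum_range, LinearMap.sum_apply, LinearMap.smul_apply, hpow]
  refine LinearMap.disjoint_ker.1 (disjoint_ker_aeval_of_isCoprime T hpq) x ?_ ?_
  · rw [LinearMap.mem_ker, ← haeval, hp, LinearMap.zero_apply]
  · rw [hq, LinearMap.zero_apply]

variable {R ι σ : Type*} [DecidableEq ι] [Fintype σ] [DecidableEq σ]

section CommSemiring

variable [CommSemiring R]

/-- The action of a matrix on the `a`-th tensor factor of `(R ^ σ) ^ ⊗ι`, the latter identified with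
the functions `(ι → σ) → R`. -/
def coordAlgHom (a : ι) : Matrix σ σ R →ₐ[R] Module.End R ((ι → σ) → R) where
  toFun K :=
    { toFun x i := ∑ c, K (i a) c * x (Function.update i a c)
      map_add' x y := by
        ext i
        simp only [Pi.add_apply, mul_add, Finset.sum_add_distrib]
      map_smul' r x := by
        ext i
        simp only [Pi.smul_apply, smul_eq_mul, mul_left_comm, Finset.mul_sum, RingHom.id_apply] }
  map_one' := by ext; simp [Matrix.one_apply]
  map_mul' K K' := by
    ext x i
    simp only [Matrix.mul_apply, Finset.sum_mul, Finset.mul_sum, mul_assoc, LinearMap.coe_mk,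
      AddHom.coe_mk, Module.End.mul_apply, Function.update_self, Function.update_idem]
    exact Finset.sum_comm
  map_zero' := by ext; simp
  map_add' K K' := by
    ext; simp [add_mul, Finset.sum_add_distrib]
  commutes' r := by
    ext; simp [Matrix.algebraMap_matrix_apply]

lemma coordAlgHom_apply (a : ι) (K : Matrix σ σ R) (x : (ι → σ) → R) (i : ι → σ) :
    coordAlgHom a K x i = ∑ c, K (i a) c * x (Function.update i a c) := rfl

lemma commute_coordAlgHom {a a' : ι} (h : a ≠ a') (K K' : Matrix σ σ R) :
    Commute (coordAlgHom a K) (coordAlgHom a' K') := by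
  refine LinearMap.ext fun x ↦ funext fun i ↦ ?_
  simp only [Module.End.mul_apply, coordAlgHom_apply, Function.update_of_ne h,
    Function.update_of_ne h.symm, Finset.mul_sum]
  rw [Finset.sum_comm]
  refine Finset.sum_congr rfl fun c _ ↦ Finset.sum_congr rfl fun c' _ ↦ ?_
  rw [Function.update_comm h, mul_left_comm]

lemma coordAlgHom_single_one [Fintype ι] (a : ι) (K : Matrix σ σ R) (i j : ι → σ) :
    coordAlgHom a K (Pi.single j 1) i = if ∀ u ≠ a, i u = j u then K (i a) (j a) else 0 := by
  simp only [coordAlgHom_apply, Pi.single_apply, Function.update_eq_iff, mul_ite, mul_one, mul_zero]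
  rw [Fintype.sum_eq_single (j a) fun c hc ↦ if_neg fun h ↦ hc h.1]
  simp only [true_and]

end CommSemiring

lemma injective_coordAlgHom_sub [CommRing R] {a a' : ι} (h : a ≠ a') {K K' : Matrix σ σ R}
    (hK : IsCoprime K.charpoly K'.charpoly) :
    Function.Injective (coordAlgHom a K - coordAlgHom a' K' : Module.End R ((ι → σ) → R)) := by
  have haeval (a : ι) (K : Matrix σ σ R) : aeval (coordAlgHom a K) K.charpoly = 0 := by
    rw [aeval_algHom_apply, K.aeval_self_charpoly, map_zero]
  exact injective_sub_of_commute_of_isCoprime (commute_coordAlgHom h K K') hK (haeval a K)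
    (haeval a' K')

lemma isCoprime_charpoly_diagonal [CommRing R] {τ : Type*} [Fintype τ] [DecidableEq τ]
    {d : σ → R} {d' : τ → R} (h : ∀ i j, IsUnit (d i - d' j)) :
    IsCoprime (diagonal d).charpoly (diagonal d').charpoly := by
  simp only [charpoly_diagonal]
  exact IsCoprime.prod_left fun i _ ↦ IsCoprime.prod_right fun j _ ↦
    isCoprime_X_sub_C_of_isUnit_sub (h i j)

end TensorFactor

section Node

lemma digit_eq_zero_of_lt {s i u : ℕ} (h : i < s ^ u) : digit s i u = 0 := by
  rw [digit, Nat.div_eq_of_lt h, Nat.zero_mod]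

variable {N s : ℕ}

lemma digit_finFunctionFinEquiv (i : Fin N → Fin s) (u : Fin N) :
    digit s (finFunctionFinEquiv i) u = i u :=
  congrArg Fin.val (congrFun (finFunctionFinEquiv.symm_apply_apply i) u)

lemma digit_finFunctionFinEquiv_eq_iff (i j : Fin N → Fin s) (a : Fin N) :
    (∀ u : ℕ, u ≠ a → digit s (finFunctionFinEquiv i) u = digit s (finFunctionFinEquiv j) u) ↔
      ∀ u ≠ a, i u = j u := by
  refine ⟨fun h u hu ↦ Fin.ext ?_, fun h u hu ↦ ?_⟩
  · simpa only [digit_finFunctionFinEquiv] using h u (Fin.val_injective.ne hu)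
  · rcases lt_or_ge u N with hN | hN
    · have hu' : (⟨u, hN⟩ : Fin N) ≠ a := fun h ↦ hu (congrArg Fin.val h)
      exact (digit_finFunctionFinEquiv i ⟨u, hN⟩).trans
        ((congrArg Fin.val (h _ hu')).trans (digit_finFunctionFinEquiv j ⟨u, hN⟩).symm)
    · have hzero (k : Fin (s ^ N)) : digit s k u = 0 :=
        digit_eq_zero_of_lt (k.2.trans_le (Nat.pow_le_pow_right (i a).pos hN))
      rw [hzero, hzero]

section Shear

variable (R : Type*) [CommRing R] (s b : ℕ)

/-- The matrix whose row `b` is `1` off the diagonal, all other entries being `0`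
(the zero matrix if `s ≤ b`). -/
def offDiagRow : Matrix (Fin s) (Fin s) R :=
  of fun i j ↦ if (i : ℕ) = b ∧ (j : ℕ) ≠ b then 1 else 0

lemma offDiagRow_mul_self : offDiagRow R s b * offDiagRow R s b = 0 := by
  ext i k
  rw [mul_apply]
  refine Finset.sum_eq_zero fun j _ ↦ ?_
  by_cases hj : (j : ℕ) = b <;> simp [offDiagRow, hj]

/-- The invertible factor `1 - offDiagRow` of the kernel matrix
`K_{a,b} = (1 - offDiagRow) * diagonal λ`. -/
def shear : (Matrix (Fin s) (Fin s) R)ˣ where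
  val := 1 - offDiagRow R s b
  inv := 1 + offDiagRow R s b
  val_inv := by
    rw [sub_mul, one_mul, mul_add, mul_one, offDiagRow_mul_self, add_zero, add_sub_cancel_right]
  inv_val := by
    rw [add_mul, one_mul, mul_sub, mul_one, offDiagRow_mul_self, sub_zero, sub_add_cancel]

end Shear

variable {F : Type*}

/-- The eigenvalues `λ_{asg + bs + j}`, `j < s`, of node `b` in group `a`. -/
def nodeEigenvalues (lam : ℕ → F) (s g a b : ℕ) (j : Fin s) : F :=
  lam (a * s * g + b * s + j)

lemma nodeEigenvalues_ne {lam : ℕ → F} {g : ℕ}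
    (hdist : ∀ i < N * g * s, ∀ j < N * g * s, lam i = lam j → i = j)
    {a a' : Fin N} (h : a ≠ a') {b b' : ℕ} (hb : b < g) (hb' : b' < g) (j j' : Fin s) :
    nodeEigenvalues lam s g a b j ≠ nodeEigenvalues lam s g a' b' j' := by
  have hdiv (a : Fin N) {b : ℕ} (hb : b < g) (j : Fin s) : (a * s * g + b * s + j) / s / g = a := by
    have hidx : a * s * g + b * s + j = s * (g * a + b) + j := by ring
    rw [hidx, Nat.mul_add_div j.pos, Nat.div_eq_of_lt j.2, add_zero, Nat.mul_add_div (by omega),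
      Nat.div_eq_of_lt hb, add_zero]
  have hlt (a : Fin N) {b : ℕ} (hb : b < g) (j : Fin s) : a * s * g + b * s + j < N * g * s := by
    rw [← Nat.div_lt_iff_lt_mul j.pos, ← Nat.div_lt_iff_lt_mul (by omega), hdiv a hb j]
    exact a.2
  intro heq
  have hidx := hdist _ (hlt a hb j) _ (hlt a' hb' j') heq
  exact h (Fin.ext (by rw [← hdiv a hb j, hidx, hdiv a' hb' j']))

variable [Field F]

/-- The kernel matrix of node `b` in group `a`, normalized by a column operation so that the blocks
of the parity check matrix become the powers of a single matrix. -/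
def nodeMatrix (lam : ℕ → F) (s g a b : ℕ) : Matrix (Fin s) (Fin s) F :=
  (shear F s b).val * diagonal (nodeEigenvalues lam s g a b) * (shear F s b)⁻¹.val

lemma charpoly_nodeMatrix (lam : ℕ → F) (s g a b : ℕ) :
    (nodeMatrix lam s g a b).charpoly = (diagonal (nodeEigenvalues lam s g a b)).charpoly := by
  rw [nodeMatrix, coe_units_inv, charpoly_units_conj]

/-- The action of `nodeMatrix` on the `a`-th base-`s` digit of the indices `i < s ^ N`. -/
def nodeOp (lam : ℕ → F) (s g : ℕ) (a : Fin N) (b : ℕ) : Module.End F ((Fin N → Fin s) → F) :=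
  coordAlgHom a (nodeMatrix lam s g a b)

lemma nodeOp_pow_mul_shear (lam : ℕ → F) (g : ℕ) (a : Fin N) (b z : ℕ) :
    nodeOp lam s g a b ^ z * coordAlgHom a (shear F s b).val =
      coordAlgHom a ((shear F s b).val * diagonal (nodeEigenvalues lam s g a b) ^ z) := by
  rw [nodeOp, ← map_pow, ← map_mul, nodeMatrix, Units.conj_pow, Units.inv_mul_cancel_right]

lemma injective_nodeOp_sub {lam : ℕ → F} {g b b' : ℕ} {a a' : Fin N} (h : a ≠ a')
    (hlam : ∀ j j', nodeEigenvalues lam s g a b j ≠ nodeEigenvalues lam s g a' b' j') :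
    Function.Injective (nodeOp lam s g a b - nodeOp lam s g a' b') := by
  refine injective_coordAlgHom_sub h ?_
  rw [charpoly_nodeMatrix, charpoly_nodeMatrix]
  exact isCoprime_charpoly_diagonal fun j j' ↦ (sub_ne_zero.2 (hlam j j')).isUnit

lemma Aent_eq_coordAlgHom_single (lam : ℕ → F) (g : ℕ) (a : Fin N) (b z : ℕ)
    (i j : Fin N → Fin s) :
    Aent lam s g a b (finFunctionFinEquiv i) (finFunctionFinEquiv j) z =
      coordAlgHom a ((shear F s b).val * diagonal (nodeEigenvalues lam s g a b) ^ z)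
        (Pi.single j 1) i := by
  rw [coordAlgHom_single_one, diagonal_pow, mul_diagonal, Aent,
    digit_finFunctionFinEquiv_eq_iff, digit_finFunctionFinEquiv, digit_finFunctionFinEquiv]
  simp only [Fin.val_inj, EmbeddingLike.apply_eq_iff_eq, shear, Matrix.sub_apply, one_apply,
    offDiagRow, of_apply, Pi.pow_apply, nodeEigenvalues]
  by_cases h : ∀ u ≠ a, i u = j u
  · have hij : i = j ↔ i a = j a :=
      ⟨fun h ↦ congrFun h a, fun ha ↦ funext fun u ↦ (eq_or_ne u a).elim (· ▸ ha) (h u)⟩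
    by_cases ha : i a = j a
    · by_cases hb : (i a : ℕ) = b <;> simp_all
    · by_cases hb : (i a : ℕ) = b <;> by_cases hb' : (j a : ℕ) = b <;> simp_all
  · have hij : i ≠ j := fun hij ↦ h fun u _ ↦ congrFun hij u
    simp [h, hij]

lemma sum_Aent_mul (lam : ℕ → F) (g : ℕ) (a : Fin N) (b z : ℕ) (i : Fin N → Fin s)
    (x : Fin (s ^ N) → F) :
    ∑ j : Fin (s ^ N), Aent lam s g a b (finFunctionFinEquiv i) j z * x j =
      (nodeOp lam s g a b ^ z) (coordAlgHom a (shear F s b).val (x ∘ finFunctionFinEquiv)) i := by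
  rw [← Module.End.mul_apply, nodeOp_pow_mul_shear, ← LinearMap.toMatrix'_mulVec, mulVec,
    dotProduct, ← finFunctionFinEquiv.sum_comp]
  refine Finset.sum_congr rfl fun j _ ↦ ?_
  rw [Aent_eq_coordAlgHom_single, LinearMap.toMatrix'_apply]
  rfl

end Node

section Enum

variable (B : Finset ℕ)

lemma enum_eq_orderEmbOfFin (c : Fin B.card) : enum B c = B.orderEmbOfFin rfl c := by
  rw [enum, List.getD_eq_getElem _ _ (by simp), Finset.orderEmbOfFin_apply]
  rfl

lemma enum_injective : Function.Injective fun c : Fin B.card ↦ enum B c := by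
  simpa only [enum_eq_orderEmbOfFin] using (B.orderEmbOfFin rfl).injective

lemma image_enum_univ : Finset.univ.image (fun c : Fin B.card ↦ enum B c) = B := by
  simpa only [enum_eq_orderEmbOfFin] using Finset.image_orderEmbOfFin_univ B rfl

lemma enum_mem (c : Fin B.card) : enum B c ∈ B := by
  rw [enum_eq_orderEmbOfFin]
  exact Finset.orderEmbOfFin_mem B rfl c

end Enum

section Hcat

variable {F : Type*} [Field F]

/-- The number `j + ℓ * c` of column `j` in block `c`, in the column numbering of `Hcat`. -/
def blockColumnEquiv (r ℓ : ℕ) : Fin r × Fin ℓ ≃ Fin (ℓ * r) :=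
  finProdFinEquiv.trans (finCongr (mul_comm r ℓ))

lemma blockColumnEquiv_div {r ℓ : ℕ} (p : Fin r × Fin ℓ) :
    (blockColumnEquiv r ℓ p : ℕ) / ℓ = p.1 :=
  congrArg (fun q : Fin r × Fin ℓ ↦ (q.1 : ℕ)) (finProdFinEquiv.symm_apply_apply p)

lemma blockColumnEquiv_mod {r ℓ : ℕ} (p : Fin r × Fin ℓ) :
    (blockColumnEquiv r ℓ p : ℕ) % ℓ = p.2 :=
  congrArg (fun q : Fin r × Fin ℓ ↦ (q.2 : ℕ)) (finProdFinEquiv.symm_apply_apply p)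

lemma Hcat_mulVec_apply (lam : ℕ → F) (s g ℓ r : ℕ) (f : ℕ → ℕ) (y : Fin (ℓ * r) → F)
    (ρ : Fin (ℓ * r)) :
    (Hcat lam s g ℓ r f *ᵥ y) ρ = ∑ c : Fin r, ∑ j : Fin ℓ,
      Aent lam s g (f c / g) (f c % g) (ρ / r) j (ρ % r) * y (blockColumnEquiv r ℓ (c, j)) := by
  rw [mulVec, dotProduct, ← (blockColumnEquiv r ℓ).sum_comp, Fintype.sum_prod_type]
  simp only [Hcat, of_apply, blockColumnEquiv_div, blockColumnEquiv_mod]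

variable {N s g r : ℕ}

/-- The vectors on which the columns of `Hcat` act, with each block of coordinates transformed by
the column operation that normalizes the kernel matrix of its node. -/
def shearedBlocks (F : Type*) [Field F] (a : Fin r → Fin N) (b : Fin r → ℕ) :
    (Fin (s ^ N * r) → F) ≃ₗ[F] (Fin r → (Fin N → Fin s) → F) :=
  LinearEquiv.funCongrLeft F F
      (((Equiv.refl _).prodCongr finFunctionFinEquiv).trans (blockColumnEquiv r (s ^ N))) ≪≫ₗ
    LinearEquiv.curry F F _ _ ≪≫ₗ
    LinearEquiv.piCongrRight fun c ↦ LinearMap.GeneralLinearGroup.generalLinearEquiv F _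
      (Units.map (coordAlgHom (a c)).toMonoidHom (shear F s (b c)))

lemma shearedBlocks_apply (a : Fin r → Fin N) (b : Fin r → ℕ) (y : Fin (s ^ N * r) → F)
    (c : Fin r) : shearedBlocks F a b y c = coordAlgHom (a c) (shear F s (b c)).val
      ((fun j ↦ y (blockColumnEquiv r (s ^ N) (c, j))) ∘ finFunctionFinEquiv) := rfl

lemma Hcat_mulVec_eq_sum_nodeOp (lam : ℕ → F) {f : ℕ → ℕ} {a : Fin r → Fin N} {b : Fin r → ℕ}
    (ha : ∀ c : Fin r, f c / g = a c) (hb : ∀ c : Fin r, f c % g = b c)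
    (y : Fin (s ^ N * r) → F) (i : Fin N → Fin s) (z : Fin r) :
    (Hcat lam s g (s ^ N) r f *ᵥ y) (finProdFinEquiv (finFunctionFinEquiv i, z)) =
      (∑ c, (nodeOp lam s g (a c) (b c) ^ (z : ℕ)) (shearedBlocks F a b y c)) i := by
  have hdiv : ((finProdFinEquiv (finFunctionFinEquiv i, z) : Fin (s ^ N * r)) : ℕ) / r =
      (finFunctionFinEquiv i : Fin (s ^ N)) :=
    blockColumnEquiv_div (finFunctionFinEquiv i, z)
  have hmod : ((finProdFinEquiv (finFunctionFinEquiv i, z) : Fin (s ^ N * r)) : ℕ) % r = z :=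
    blockColumnEquiv_mod (finFunctionFinEquiv i, z)
  rw [Hcat_mulVec_apply, Finset.sum_apply]
  simp only [hdiv, hmod, ha, hb, shearedBlocks_apply, sum_Aent_mul]

lemma det_Hcat_ne_zero_iff (lam : ℕ → F) {f : ℕ → ℕ} {a : Fin r → Fin N} {b : Fin r → ℕ}
    (ha : ∀ c : Fin r, f c / g = a c) (hb : ∀ c : Fin r, f c % g = b c) :
    (Hcat lam s g (s ^ N) r f).det ≠ 0 ↔
      BlockVandermondeInjective (fun c ↦ nodeOp lam s g (a c) (b c)) Finset.univ := by
  have hker (y : Fin (s ^ N * r) → F) : Hcat lam s g (s ^ N) r f *ᵥ y = 0 ↔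
      ∀ z < r, ∑ c, (nodeOp lam s g (a c) (b c) ^ z) (shearedBlocks F a b y c) = 0 := by
    simp only [funext_iff, ← finProdFinEquiv.forall_congr_right, Prod.forall,
      ← finFunctionFinEquiv.forall_congr_right, Hcat_mulVec_eq_sum_nodeOp lam ha hb]
    exact ⟨fun h z hz i ↦ h i ⟨z, hz⟩, fun h i z ↦ h z z.2 i⟩
  have hzero (y : Fin (s ^ N * r) → F) : y = 0 ↔ ∀ c, shearedBlocks F a b y c = 0 := by
    rw [← (shearedBlocks F a b).map_eq_zero_iff, funext_iff]
    rfl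
  rw [Ne, ← exists_mulVec_eq_zero_iff, not_exists, BlockVandermondeInjective,
    (shearedBlocks F a b).surjective.forall]
  refine forall_congr' fun y ↦ ?_
  simp only [Finset.card_univ, Fintype.card_fin, ← hker, Finset.mem_univ, forall_true_left, ← hzero]
  tauto

lemma AmatB_eq_Hcat (lam : ℕ → F) (s ℓ a : ℕ) {B : Finset ℕ} (hB : B ⊆ Finset.range g) :
    AmatB lam s g ℓ a B.card B = Hcat lam s g ℓ B.card fun c ↦ a * g + enum B c := by
  ext ρ κ
  have hlt : enum B (κ / ℓ) < g :=
    Finset.mem_range.1 (hB (enum_mem B ⟨κ / ℓ, Nat.div_lt_of_lt_mul κ.2⟩))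
  simp only [AmatB, Hcat, of_apply]
  rw [mul_comm a g, Nat.mul_add_div (by omega), Nat.div_eq_of_lt hlt, Nat.mul_add_mod,
    Nat.mod_eq_of_lt hlt, add_zero]

end Hcat

section MDS

variable {F : Type*} [Field F] {lam : ℕ → F} {N s g : ℕ}

lemma LocalConstraints.blockVandermondeInjective (hloc : LocalConstraints lam s g (s ^ N) N)
    (a : Fin N) {B : Finset ℕ} (hB : B ⊆ Finset.range g) :
    BlockVandermondeInjective (nodeOp lam s g a) B := by
  rcases B.eq_empty_or_nonempty with rfl | hne
  · exact .empty _
  have hlt (c : Fin B.card) : enum B c < g := Finset.mem_range.1 (hB (enum_mem B c))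
  have hdet := hloc a a.2 B hB hne
  rw [AmatB_eq_Hcat lam s _ a hB, det_Hcat_ne_zero_iff lam (a := fun _ ↦ a)
    (b := fun c ↦ enum B c) (fun c ↦ ?_) (fun c ↦ ?_)] at hdet
  · rw [← image_enum_univ B, BlockVandermondeInjective.image_iff (enum_injective B).injOn]
    exact hdet
  · rw [mul_comm, Nat.mul_add_div (by have := hlt c; omega), Nat.div_eq_of_lt (hlt c), add_zero]
  · rw [mul_comm, Nat.mul_add_mod, Nat.mod_eq_of_lt (hlt c)]

theorem det_Hcat_enum_ne_zero
    (hdist : ∀ i < N * g * s, ∀ j < N * g * s, lam i = lam j → i = j)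
    (hloc : LocalConstraints lam s g (s ^ N) N) {Fs : Finset ℕ}
    (hFs : Fs ⊆ Finset.range (N * g)) :
    (Hcat lam s g (s ^ N) Fs.card (enum Fs)).det ≠ 0 := by
  have hlt (c : Fin Fs.card) : enum Fs c < N * g := Finset.mem_range.1 (hFs (enum_mem Fs c))
  have hg (c : Fin Fs.card) : 0 < g := Nat.pos_of_mul_pos_left ((Nat.zero_le _).trans_lt (hlt c))
  let a (c : Fin Fs.card) : Fin N := ⟨enum Fs c / g, (Nat.div_lt_iff_lt_mul (hg c)).2 (hlt c)⟩
  let b (c : Fin Fs.card) : ℕ := enum Fs c % g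
  have hb (c : Fin Fs.card) : b c < g := Nat.mod_lt _ (hg c)
  rw [det_Hcat_ne_zero_iff lam (a := a) (b := b) (fun _ ↦ rfl) fun _ ↦ rfl]
  refine .of_fibers a (fun a₀ _ ↦ ?_) (fun c _ c' _ h ↦ commute_coordAlgHom h.symm _ _)
    fun c _ c' _ h ↦ injective_nodeOp_sub h (nodeEigenvalues_ne hdist h (hb c) (hb c'))
  have hinj : Set.InjOn b ({c | a c = a₀} : Finset (Fin Fs.card)) := fun c hc c' hc' h ↦ by
    have hq : a c = a c' := by simp_all
    refine enum_injective Fs (?_ : enum Fs c = enum Fs c')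
    rw [← Nat.div_add_mod (enum Fs c) g, ← Nat.div_add_mod (enum Fs c') g]
    exact congrArg₂ (fun q t ↦ g * q + t) (congrArg Fin.val hq) h
  have hlocal := hloc.blockVandermondeInjective a₀ (B := Finset.image b {c | a c = a₀})
    (by simp [Finset.subset_iff, hb])
  refine ((BlockVandermondeInjective.image_iff hinj).1 hlocal).congr fun c hc ↦ ?_
  rw [(Finset.mem_filter.1 hc).2, Function.comp_apply]

lemma InCode.eq_of_det_ne_zero {ℓ n : ℕ} {Fs : Finset ℕ} (hFs : Fs ⊆ Finset.range n)
    (hdet : (Hcat lam s g ℓ Fs.card (enum Fs)).det ≠ 0) {C C' : ℕ → ℕ → F}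
    (hC : InCode lam s g ℓ Fs.card n C) (hC' : InCode lam s g ℓ Fs.card n C')
    (heq : ∀ m < n, m ∉ Fs → ∀ j < ℓ, C m j = C' m j) :
    ∀ m < n, ∀ j < ℓ, C m j = C' m j := by
  let y (κ : Fin (ℓ * Fs.card)) : F :=
    C (enum Fs (κ / ℓ)) (κ % ℓ) - C' (enum Fs (κ / ℓ)) (κ % ℓ)
  have hy : Hcat lam s g ℓ Fs.card (enum Fs) *ᵥ y = 0 := by
    ext ρ
    let term (m : ℕ) : F := ∑ j ∈ Finset.range ℓ,
      Aent lam s g (m / g) (m % g) (ρ / Fs.card) j (ρ % Fs.card) * (C m j - C' m j)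
    calc (Hcat lam s g ℓ Fs.card (enum Fs) *ᵥ y) ρ = ∑ c : Fin Fs.card, term (enum Fs c) := by
          simp only [Hcat_mulVec_apply, term, y, blockColumnEquiv_div, blockColumnEquiv_mod,
            Finset.sum_range]
      _ = ∑ m ∈ Fs, term m := by
          rw [← Finset.sum_image (enum_injective Fs).injOn, image_enum_univ]
      _ = ∑ m ∈ Finset.range n, term m := by
          refine Finset.sum_subset hFs fun m hm hmF ↦ Finset.sum_eq_zero fun j hj ↦ ?_
          rw [heq m (Finset.mem_range.1 hm) hmF j (Finset.mem_range.1 hj), sub_self, mul_zero]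
      _ = 0 := by
          simp only [term, mul_sub, Finset.sum_sub_distrib, hC ρ ρ.2, hC' ρ ρ.2, sub_zero]
  intro m hm j hj
  by_cases hmF : m ∈ Fs
  · rw [← image_enum_univ Fs, Finset.mem_image] at hmF
    obtain ⟨c, -, rfl⟩ := hmF
    have h := congrFun (eq_zero_of_mulVec_eq_zero hdet hy) (blockColumnEquiv _ ℓ (c, ⟨j, hj⟩))
    simp only [y, blockColumnEquiv_div, blockColumnEquiv_mod] at h
    exact sub_eq_zero.1 h
  · exact heq m hm hmF j hj

theorem statement5_general {F : Type*} [Field F] {n s g : ℕ} (hg : g ∣ n) {lam : ℕ → F}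
    (hdist : ∀ i < n * s, ∀ j < n * s, lam i = lam j → i = j)
    (hloc : LocalConstraints lam s g (s ^ (n / g)) (n / g)) {Fs : Finset ℕ}
    (hFs : Fs ⊆ Finset.range n) :
    (Hcat lam s g (s ^ (n / g)) Fs.card (enum Fs)).det ≠ 0 ∧
      ∀ C C' : ℕ → ℕ → F, InCode lam s g (s ^ (n / g)) Fs.card n C →
        InCode lam s g (s ^ (n / g)) Fs.card n C' →
        (∀ m < n, m ∉ Fs → ∀ j < s ^ (n / g), C m j = C' m j) →
        ∀ m < n, ∀ j < s ^ (n / g), C m j = C' m j := by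
  have hdet : (Hcat lam s g (s ^ (n / g)) Fs.card (enum Fs)).det ≠ 0 := by
    rw [← Nat.div_mul_cancel hg] at hdist hFs
    exact det_Hcat_enum_ne_zero hdist hloc hFs
  exact ⟨hdet, fun _ _ ↦ InCode.eq_of_det_ne_zero hFs hdet⟩

end MDS

/-- second construction, group size `s+1`: with pairwise distinct `λ_i`
satisfying the local constraints, the code of Section 2.2 is an `(n,k,ℓ)` MDS array code:
for every `r`-subset `Fs` of `[n]` the matrix `[H_{f₁} | ⋯ | H_{f_r}]` is invertible;
equivalently, two codewords agreeing outside `Fs` agree everywhere, so any `k` coordinates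
determine the codeword. -/
theorem statement5 (F : Type*) [Field F] [Fintype F] (n k d s ℓ r : ℕ)
    (hk : 1 ≤ k) (hkn : k < n) (hd₁ : k + 1 ≤ d) (hd₂ : d ≤ n - 1)
    (hs : s = d - k + 1) (hdiv : (s + 1) ∣ n) (hℓ : ℓ = s ^ (n / (s + 1))) (hr : r = n - k)
    (lam : ℕ → F)
    (hdist : ∀ i < n * s, ∀ j < n * s, lam i = lam j → i = j)
    (hloc : LocalConstraints lam s (s + 1) ℓ (n / (s + 1))) :
    ∀ Fs : Finset ℕ, Fs ⊆ Finset.range n → Fs.card = r →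
      (Hcat lam s (s + 1) ℓ r (enum Fs)).det ≠ 0 ∧
      (∀ C C' : ℕ → ℕ → F, InCode lam s (s + 1) ℓ r n C → InCode lam s (s + 1) ℓ r n C' →
        (∀ m < n, m ∉ Fs → ∀ j < ℓ, C m j = C' m j) →
        ∀ m < n, ∀ j < ℓ, C m j = C' m j) := by
  subst hℓ
  rintro Fs hFs rfl
  exact statement5_general hdiv hdist hloc hFs
end

section
/- Let a ∈ {0,…,n/s−1}, let B ⊆ {0,…,s−1} be nonempty with |B| = v, and let t > v be an integer. Suppose λ_0, …, λ_{ns−1} are pairwise distinct and satisfy the local constraints. Then there exists an ℓt × ℓt matrix M over F_q such that: (i) M · A_{a,B}^(t) equals the block matrix with A_{a,B}^(v) on top and the ℓ(t−v) × ℓv zero matrix below; and (ii) for every a′ with a < a′ < n/s and every b ∈ {0,…,s−1}, M · A_{a′,b}^(t) equals the block matrix with A_{a′,b}^(v) on top and a matrix Â below, where Â = A_{a′,b}^(t−v) · Q for some invertible ℓ × ℓ matrix Q over F_q (i.e., Â is column equivalent to A_{a′,b}^(t−v)). -/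
open Matrix

/-!
Let `R` be the ring of `ℓ × ℓ` matrices, `S` the matrix of signs in `A_{a,b}` and `D` the diagonal
matrix of its `λ`s. The `z`-th slice of `A_{a,b}^{(t)}` is `S * D ^ z = N ^ z * S`, where
`N = S * D * S⁻¹` is the node of `(a, b)`. So a row vector times `A_{a,b}^{(t)}` is, up to the unit
`S`, a row of a left polynomial over `R` evaluated at `N`, and `det A_{a,B} ≠ 0` says that a
polynomial of degree `< v` vanishing at the `v` nodes of `(a, b)`, `b ∈ B`, is zero. Hence there is
a monic `G` of degree `v` vanishing at all these nodes. The rows of `M` are the coefficients of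
`1, X, …, X ^ (v - 1)` on top and of `G, G X, …, G X ^ (t - v - 1)` below.

For `a' ≠ a` the matrices of `A_{a',b}` act on a different base-`s` digit of the index, so they
commute with the nodes of group `a` and, by uniqueness, with the coefficients of `G`. The lower part
of `M * A_{a',b}^{(t)}` is therefore `A_{a',b}^{(t-v)} * G(D')`, with `D'` the matrix of `λ`s of
`A_{a',b}`. Finally `G(D')` is a unit: if `y * G(D') = 0` then `y * G` is divisible by `X - D'` on
the right, and as the `λ`s are distinct each difference of a node and `D'` is a unit, so the
quotient, of degree `< v`, vanishes at all the nodes and is zero.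
-/

section NodalPolynomials

open Polynomial

section Semiring

variable {R : Type*} [Semiring R]

theorem eval_mul_C_of_semiconjBy (p : R[X]) {a x y : R} (h : SemiconjBy a x y) :
    (p * C a).eval x = p.eval y * a := by
  induction p using Polynomial.induction_on' with
  | add p₁ p₂ h₁ h₂ => rw [add_mul, eval_add, h₁, h₂, eval_add, add_mul]
  | monomial n c =>
    rw [monomial_mul_C, eval_monomial, eval_monomial, mul_assoc, mul_assoc,
      (h.pow_right n).eq]

theorem commute_eval_self {p : R[X]} {y : R} (h : Commute (C y) p) : Commute y (p.eval y) := by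
  have heval := congrArg (eval y) h.eq
  rwa [eval_C_mul, eval_mul_C_of_semiconjBy p (Commute.refl y)] at heval

variable {ι : Type*}

/-- The points `x j` are unisolvent in degree `< v` if a left polynomial of degree `< v`
(coefficients written to the left of the powers of the variable) is determined by its values
at them. -/
def IsUnisolvent (x : ι → R) (v : ℕ) : Prop :=
  ∀ p : R[X], p.degree < v → (∀ j, p.eval (x j) = 0) → p = 0

/-- A nodal polynomial of degree `v` for the points `x j`: monic of degree `v` and vanishing at
each of them. The leading coefficient is prescribed through `coeff` so that the zero ring needs
no special treatment. -/
structure IsNodal (G : R[X]) (x : ι → R) (v : ℕ) : Prop where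
  natDegree_le : G.natDegree ≤ v
  coeff_eq_one : G.coeff v = 1
  eval_eq_zero : ∀ j, G.eval (x j) = 0

end Semiring

variable {R : Type*} [Ring R] {ι : Type*}

theorem eval_mul_X_sub_C_of_commute (p : R[X]) {a x : R} (h : Commute a x) :
    (p * (X - C a)).eval x = p.eval x * (x - a) := by
  rw [mul_sub, eval_sub, eval_mul_X, eval_mul_C_of_semiconjBy p h, mul_sub]

theorem exists_eq_mul_X_sub_C_add_C_eval (p : R[X]) (a : R) :
    ∃ q : R[X], p = q * (X - C a) + C (p.eval a) := by
  induction p using Polynomial.induction_on' with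
  | add p₁ p₂ h₁ h₂ =>
    obtain ⟨q₁, h₁⟩ := h₁
    obtain ⟨q₂, h₂⟩ := h₂
    refine ⟨q₁ + q₂, ?_⟩
    rw [eval_add, C_add, add_mul, add_add_add_comm, ← h₁, ← h₂]
  | monomial n c =>
    have hcomm : Commute (X : R[X]) (C a) := X_mul_C a
    refine ⟨C c * ∑ i ∈ Finset.range n, X ^ i * C a ^ (n - 1 - i), ?_⟩
    rw [mul_assoc, hcomm.geom_sum₂_mul, eval_monomial, C_mul, C_pow, mul_sub,
      sub_add_cancel, C_mul_X_pow_eq_monomial]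

theorem IsUnisolvent.exists_isNodal [IsArtinianRing R] {v : ℕ} {x : Fin v → R}
    (hx : IsUnisolvent x v) : ∃ G : R[X], IsNodal G x v := by
  let toPoly : (Fin v → R) ≃ₗ[R] degreeLT R v := (degreeLTEquiv R v).symm
  let evalAt : (Fin v → R) →ₗ[R] Fin v → R :=
    LinearMap.pi fun j => leval (x j) ∘ₗ (degreeLT R v).subtype ∘ₗ toPoly
  have hinj : Function.Injective evalAt := by
    rw [injective_iff_map_eq_zero]
    intro c hc
    have hzero := hx (toPoly c) (mem_degreeLT.mp (toPoly c).2) fun j => congrFun hc j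
    exact toPoly.map_eq_zero_iff.mp (Subtype.ext hzero)
  obtain ⟨c, hc⟩ := IsArtinian.surjective_of_injective_endomorphism evalAt hinj fun j => x j ^ v
  have hdeg : (toPoly c : R[X]).degree < v := mem_degreeLT.mp (toPoly c).2
  refine ⟨X ^ v - (toPoly c : R[X]), ?_, ?_, fun j => ?_⟩
  · exact (natDegree_sub_le_of_le (natDegree_X_pow_le v)
      (natDegree_le_of_degree_le hdeg.le)).trans_eq (max_self v)
  · rw [coeff_sub, coeff_X_pow_self, coeff_eq_zero_of_degree_lt hdeg, sub_zero]
  · rw [eval_sub, ← one_mul (X ^ v), eval_mul_X_pow, eval_one, one_mul, sub_eq_zero]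
    exact (congrFun hc j).symm

namespace IsNodal

variable {x : ι → R} {v : ℕ} {G : R[X]}

theorem commute_C (hG : IsNodal G x v) (hx : IsUnisolvent x v) {y : R}
    (hy : ∀ j, Commute y (x j)) : Commute (C y) G := by
  refine sub_eq_zero.mp (hx _ ?_ fun j => ?_)
  · rw [degree_lt_iff_coeff_zero]
    intro z hz
    rw [coeff_sub, coeff_C_mul, coeff_mul_C]
    rcases hz.eq_or_lt with rfl | hz
    · rw [hG.coeff_eq_one, mul_one, one_mul, sub_self]
    · rw [coeff_eq_zero_of_natDegree_lt (hG.natDegree_le.trans_lt hz), mul_zero, zero_mul,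
        sub_self]
  · rw [eval_sub, eval_C_mul, eval_mul_C_of_semiconjBy G (hy j), hG.eval_eq_zero, mul_zero,
      zero_mul, sub_zero]

theorem isRightRegular_eval (hG : IsNodal G x v) (hx : IsUnisolvent x v) {a : R}
    (ha : ∀ j, Commute a (x j)) (hunit : ∀ j, IsUnit (x j - a)) :
    IsRightRegular (G.eval a) := by
  rw [isRightRegular_iff_left_eq_zero_of_mul]
  intro y hy
  nontriviality R
  -- If `y G(a) = 0` then `y G = q (X - a)`, where `q` also vanishes at the points `x j`.
  obtain ⟨q, hq⟩ := exists_eq_mul_X_sub_C_add_C_eval (C y * G) a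
  rw [eval_C_mul, hy, C_0, add_zero] at hq
  have hqdeg : q.degree < v := by
    by_contra! hle
    have hle' : (C y * G).degree ≤ v :=
      degree_le_of_natDegree_le ((natDegree_C_mul_le y G).trans hG.natDegree_le)
    rw [hq, (monic_X_sub_C a).degree_mul, degree_X_sub_C] at hle'
    have hlt : (v : WithBot ℕ) < v + 1 := by exact_mod_cast v.lt_succ_self
    exact (hlt.trans_le (by gcongr)).not_ge hle'
  have hq0 : q = 0 := by
    refine hx q hqdeg fun j => (hunit j).mul_left_eq_zero.mp ?_
    rw [← eval_mul_X_sub_C_of_commute q (ha j), ← hq, eval_C_mul, hG.eval_eq_zero, mul_zero]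
  have hyG : C y * G = 0 := by rw [hq, hq0, zero_mul]
  simpa [hG.coeff_eq_one] using congrArg (coeff · v) hyG

theorem isUnit_eval [IsArtinianRing R] (hG : IsNodal G x v) (hx : IsUnisolvent x v) {a : R}
    (ha : ∀ j, Commute a (x j)) (hunit : ∀ j, IsUnit (x j - a)) : IsUnit (G.eval a) :=
  IsArtinianRing.isUnit_iff_isRightRegular.mpr (hG.isRightRegular_eval hx ha hunit)

end IsNodal

end NodalPolynomials

section Coordinates

variable {ι σ α : Type*}

open scoped Classical in
/-- The matrix `K` acting on the coordinate `a` of `ι → σ`, i.e. `I ⊗ ⋯ ⊗ K ⊗ ⋯ ⊗ I` with `K` in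
position `a`. -/
noncomputable def coordinateMatrix [Zero α] (a : ι) (K : Matrix σ σ α) :
    Matrix (ι → σ) (ι → σ) α :=
  Matrix.of fun f h => if ∀ u, u ≠ a → f u = h u then K (f a) (h a) else 0

variable [Fintype ι] [DecidableEq ι] [Fintype σ] [CommSemiring α]

theorem coordinateMatrix_mulVec (a : ι) (K : Matrix σ σ α) (φ : (ι → σ) → α) (f : ι → σ) :
    (coordinateMatrix a K *ᵥ φ) f = ∑ x, K (f a) x * φ (Function.update f a x) := by
  symm
  refine Finset.sum_of_injOn (Function.update f a) (Function.update_injective f a).injOn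
    (fun _ _ => Finset.mem_coe.mpr (Finset.mem_univ _)) (fun h _ hh => ?_) fun x _ => ?_
  · have hdisagree : ¬ ∀ u, u ≠ a → f u = h u := fun hagree =>
      hh ⟨h a, Finset.mem_coe.mpr (Finset.mem_univ _), Function.update_eq_iff.mpr ⟨rfl, hagree⟩⟩
    simp only [coordinateMatrix, Matrix.of_apply, if_neg hdisagree, zero_mul]
  · have hagree : ∀ u, u ≠ a → f u = Function.update f a x u := fun u hu =>
      (Function.update_of_ne hu x f).symm
    simp only [coordinateMatrix, Matrix.of_apply, if_pos hagree, Function.update_self]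

theorem coordinateMatrix_commute {a a' : ι} (h : a ≠ a') (K K' : Matrix σ σ α) :
    Commute (coordinateMatrix a K) (coordinateMatrix a' K') := by
  refine Matrix.ext_iff_mulVec.mpr fun φ => funext fun f => ?_
  simp only [← Matrix.mulVec_mulVec, coordinateMatrix_mulVec, Function.update_of_ne h,
    Function.update_of_ne h.symm, Finset.mul_sum, Function.update_comm h]
  rw [Finset.sum_comm]
  exact Finset.sum_congr rfl fun _ _ => Finset.sum_congr rfl fun _ _ => mul_left_comm _ _ _

end Coordinates

section Digits

variable {s m : ℕ}

theorem finFunctionFinEquiv_symm_val_eq_digit (i : Fin (s ^ m)) (u : Fin m) :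
    ((finFunctionFinEquiv.symm i u : Fin s) : ℕ) = digit s i u := by
  simp [digit]

theorem digit_eq_zero_of_le (i : Fin (s ^ m)) {u : ℕ} (hu : m ≤ u) : digit s i u = 0 := by
  rcases Nat.eq_zero_or_pos s with rfl | hs
  · have hi : (i : ℕ) = 0 :=
      Nat.lt_one_iff.mp (i.2.trans_le (pow_le_one₀ le_rfl zero_le_one))
    simp [digit, hi]
  · simp [digit, Nat.div_eq_of_lt (i.2.trans_le (Nat.pow_le_pow_right hs hu))]

theorem forall_digit_eq_iff (i j : Fin (s ^ m)) (a : Fin m) :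
    (∀ u, u ≠ (a : ℕ) → digit s i u = digit s j u) ↔
      ∀ u, u ≠ a → finFunctionFinEquiv.symm i u = finFunctionFinEquiv.symm j u := by
  simp only [Fin.ext_iff, finFunctionFinEquiv_symm_val_eq_digit, ne_eq]
  refine ⟨fun h u hu => h u hu, fun h u hu => ?_⟩
  rcases lt_or_ge u m with hum | hum
  · exact h ⟨u, hum⟩ hu
  · rw [digit_eq_zero_of_le i hum, digit_eq_zero_of_le j hum]

theorem eq_iff_forall_digit_eq (i j : Fin (s ^ m)) (a : Fin m) :
    i = j ↔ (∀ u, u ≠ (a : ℕ) → digit s i u = digit s j u) ∧ digit s i a = digit s j a := by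
  rw [forall_digit_eq_iff, ← finFunctionFinEquiv_symm_val_eq_digit,
    ← finFunctionFinEquiv_symm_val_eq_digit, ← Fin.ext_iff,
    ← finFunctionFinEquiv.symm.injective.eq_iff, funext_iff]
  refine ⟨fun h => ⟨fun u _ => h u, h a⟩, fun ⟨hne, ha⟩ u => ?_⟩
  rcases eq_or_ne u a with rfl | hu
  · exact ha
  · exact hne u hu

variable {α : Type*}

/-- The matrix `K` acting on the `a`-th base-`s` digit of the indices `0, …, s ^ m - 1`. -/
noncomputable def digitMatrix [Zero α] (a : Fin m) (K : Matrix (Fin s) (Fin s) α) :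
    Matrix (Fin (s ^ m)) (Fin (s ^ m)) α :=
  (coordinateMatrix a K).submatrix finFunctionFinEquiv.symm finFunctionFinEquiv.symm

open scoped Classical in
theorem digitMatrix_of_apply [Zero α] (a : Fin m) (k : ℕ → ℕ → α) (i j : Fin (s ^ m)) :
    digitMatrix a (Matrix.of fun x y : Fin s => k x y) i j =
      if ∀ u, u ≠ (a : ℕ) → digit s i u = digit s j u then k (digit s i a) (digit s j a)
      else 0 := by
  simp only [digitMatrix, coordinateMatrix, Matrix.submatrix_apply, Matrix.of_apply,
    forall_digit_eq_iff, finFunctionFinEquiv_symm_val_eq_digit]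

theorem digitMatrix_commute [CommSemiring α] {a a' : Fin m} (h : a ≠ a')
    (K K' : Matrix (Fin s) (Fin s) α) :
    Commute (digitMatrix a K) (digitMatrix a' K') := by
  rw [Commute, SemiconjBy, digitMatrix, digitMatrix, Matrix.submatrix_mul_equiv,
    Matrix.submatrix_mul_equiv, (coordinateMatrix_commute h K K').eq]

end Digits

section Slices

variable {F : Type*} [Field F] {s m : ℕ}

open scoped Classical in
/-- The matrix of the signs in `A_{a,b}`: its `(i,j)` block is this sign times a column of powers
of a single `λ`. Equivalently, `A_{a,b}^{(1)}`. -/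
noncomputable def signMatrix (F : Type*) [Field F] (s ℓ a b : ℕ) :
    Matrix (Fin ℓ) (Fin ℓ) F :=
  Matrix.of fun i j =>
    if i = j then 1
    else if digit s i a = b ∧ digit s j a ≠ b ∧ (∀ u, u ≠ a → digit s i u = digit s j u) then -1
    else 0

/-- The diagonal matrix of the `λ`s occurring in the block columns of `A_{a,b}`. -/
def pointDiagonal (lam : ℕ → F) (s g ℓ a b : ℕ) : Matrix (Fin ℓ) (Fin ℓ) F :=
  Matrix.diagonal fun j => lam (a * s * g + b * s + digit s j a)

theorem signMatrix_mul_pointDiagonal_pow_apply (lam : ℕ → F) (s g ℓ a b z : ℕ) (i j : Fin ℓ) :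
    (signMatrix F s ℓ a b * pointDiagonal lam s g ℓ a b ^ z) i j = Aent lam s g a b i j z := by
  rw [pointDiagonal, Matrix.diagonal_pow, Matrix.mul_diagonal]
  simp only [signMatrix, Aent, Matrix.of_apply, Pi.pow_apply, ite_mul, one_mul, neg_mul, zero_mul,
    Fin.ext_iff]

theorem isUnit_signMatrix (s ℓ a b : ℕ) : IsUnit (signMatrix F s ℓ a b) := by
  have hsupport : ∀ i j, (signMatrix F s ℓ a b - 1) i j ≠ 0 →
      digit s i a = b ∧ digit s j a ≠ b := by
    intro i j hij
    by_contra hdigit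
    refine hij ?_
    rcases eq_or_ne i j with rfl | hne
    · simp [signMatrix]
    · rw [Matrix.sub_apply, Matrix.one_apply_ne hne, sub_zero, signMatrix, Matrix.of_apply,
        if_neg hne, if_neg fun h => hdigit ⟨h.1, h.2.1⟩]
  have hsq : (signMatrix F s ℓ a b - 1) ^ 2 = 0 := by
    ext i j
    rw [sq, Matrix.mul_apply, Matrix.zero_apply]
    refine Finset.sum_eq_zero fun k _ => by_contra fun hk => ?_
    exact (hsupport i k (left_ne_zero_of_mul hk)).2 (hsupport k j (right_ne_zero_of_mul hk)).1
  simpa only [sub_add_cancel] using (IsNilpotent.mk _ 2 hsq).isUnit_add_one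

theorem signMatrix_eq_digitMatrix (a : Fin m) (b : ℕ) :
    signMatrix F s (s ^ m) a b =
      digitMatrix a (Matrix.of fun x y : Fin s =>
        if (x : ℕ) = y then 1 else if (x : ℕ) = b then -1 else 0) := by
  ext i j
  rw [digitMatrix_of_apply a (fun x y => if x = y then 1 else if x = b then -1 else 0)]
  have hij := eq_iff_forall_digit_eq i j a
  simp only [signMatrix, Matrix.of_apply]
  split_ifs <;> grind

theorem pointDiagonal_eq_digitMatrix (lam : ℕ → F) (g : ℕ) (a : Fin m) (b : ℕ) :
    pointDiagonal lam s g (s ^ m) a b =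
      digitMatrix a (Matrix.of fun x y : Fin s =>
        if (x : ℕ) = y then lam (a * s * g + b * s + x) else 0) := by
  ext i j
  rw [digitMatrix_of_apply a (fun x y => if x = y then lam (a * s * g + b * s + x) else 0)]
  have hij := eq_iff_forall_digit_eq i j a
  simp only [pointDiagonal, Matrix.diagonal_apply]
  split_ifs <;> grind

theorem isUnit_pointDiagonal_sub {lam : ℕ → F} {g : ℕ}
    (hlam : Set.InjOn lam (Set.Iio (m * s * g))) {a a' b b' : ℕ} (ha : a < m) (ha' : a' < m)
    (hne : a' ≠ a) (hb : b < g) (hb' : b' < g) :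
    IsUnit (pointDiagonal lam s g (s ^ m) a b - pointDiagonal lam s g (s ^ m) a' b') := by
  rw [pointDiagonal, pointDiagonal, Matrix.diagonal_sub, Matrix.isUnit_diagonal, Pi.isUnit_iff]
  intro j
  rw [isUnit_iff_ne_zero, sub_ne_zero]
  have hs : 0 < s := (Nat.pow_pos_iff.mp j.pos).resolve_right (Nat.ne_zero_of_lt ha)
  have hlt : ∀ {x y c : ℕ}, y < g → x < c →
      x * s * g + y * s + digit s j x < c * s * g := by
    intro x y c hy hx
    have hdigit : digit s j x < s := Nat.mod_lt _ hs
    calc x * s * g + y * s + digit s j x < x * s * g + (y + 1) * s := by linarith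
      _ ≤ x * s * g + g * s := by gcongr; exact hy
      _ = (x + 1) * s * g := by ring
      _ ≤ c * s * g := by gcongr; exact hx
  intro heq
  have hindex := hlam (hlt hb ha) (hlt hb' ha') heq
  rcases hne.lt_or_gt with h | h
  · have := hlt hb' h
    omega
  · have := hlt hb h
    omega

/-- The node of the block column `A_{a,b}`, the matrix `N` in terms of which its slices are
`N ^ z * S`, with `S` the sign matrix. -/
noncomputable def node (lam : ℕ → F) (s g ℓ a b : ℕ) : Matrix (Fin ℓ) (Fin ℓ) F :=
  signMatrix F s ℓ a b * pointDiagonal lam s g ℓ a b * (signMatrix F s ℓ a b)⁻¹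

theorem signMatrix_semiconjBy_node (lam : ℕ → F) (s g ℓ a b : ℕ) :
    SemiconjBy (signMatrix F s ℓ a b) (pointDiagonal lam s g ℓ a b) (node lam s g ℓ a b) := by
  have hdet := (Matrix.isUnit_iff_isUnit_det _).mp (isUnit_signMatrix (F := F) s ℓ a b)
  rw [SemiconjBy, node, Matrix.nonsing_inv_mul_cancel_right _ _ hdet]

theorem digitMatrix_commute_node (lam : ℕ → F) (g : ℕ) {a a' : Fin m} (h : a' ≠ a)
    (K : Matrix (Fin s) (Fin s) F) (b : ℕ) :
    Commute (digitMatrix a' K) (node lam s g (s ^ m) a b) := by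
  obtain ⟨S, hS⟩ := isUnit_signMatrix (F := F) s (s ^ m) a b
  have hsign : Commute (digitMatrix a' K) (S : Matrix (Fin (s ^ m)) (Fin (s ^ m)) F) := by
    rw [hS, signMatrix_eq_digitMatrix]
    exact digitMatrix_commute h _ _
  have hpoint : Commute (digitMatrix a' K) (pointDiagonal lam s g (s ^ m) a b) := by
    rw [pointDiagonal_eq_digitMatrix]
    exact digitMatrix_commute h _ _
  rw [node, ← hS, ← Matrix.coe_units_inv]
  exact (hsign.mul_right hpoint).mul_right hsign.units_inv_right

theorem signMatrix_commute_node (lam : ℕ → F) (g : ℕ) {a a' : ℕ} (ha : a < m) (ha' : a' < m)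
    (hne : a' ≠ a) (b b' : ℕ) :
    Commute (signMatrix F s (s ^ m) a' b') (node lam s g (s ^ m) a b) := by
  lift a to Fin m using ha
  lift a' to Fin m using ha'
  rw [signMatrix_eq_digitMatrix]
  exact digitMatrix_commute_node lam g (ne_of_apply_ne _ hne) _ b

theorem pointDiagonal_commute_node (lam : ℕ → F) (g : ℕ) {a a' : ℕ} (ha : a < m) (ha' : a' < m)
    (hne : a' ≠ a) (b b' : ℕ) :
    Commute (pointDiagonal lam s g (s ^ m) a' b') (node lam s g (s ^ m) a b) := by
  lift a to Fin m using ha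
  lift a' to Fin m using ha'
  rw [pointDiagonal_eq_digitMatrix]
  exact digitMatrix_commute_node lam g (ne_of_apply_ne _ hne) _ b

theorem signMatrix_commute_pointDiagonal (lam : ℕ → F) (g : ℕ) {a a' : ℕ} (ha : a < m)
    (ha' : a' < m) (hne : a' ≠ a) (b b' : ℕ) :
    Commute (signMatrix F s (s ^ m) a b) (pointDiagonal lam s g (s ^ m) a' b') := by
  lift a to Fin m using ha
  lift a' to Fin m using ha'
  rw [signMatrix_eq_digitMatrix, pointDiagonal_eq_digitMatrix]
  exact digitMatrix_commute (ne_of_apply_ne _ hne.symm) _ _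

theorem isUnit_node_sub_pointDiagonal {lam : ℕ → F} {g : ℕ}
    (hlam : Set.InjOn lam (Set.Iio (m * s * g))) {a a' b b' : ℕ} (ha : a < m) (ha' : a' < m)
    (hne : a' ≠ a) (hb : b < g) (hb' : b' < g) :
    IsUnit (node lam s g (s ^ m) a b - pointDiagonal lam s g (s ^ m) a' b') := by
  have hsign := isUnit_signMatrix (F := F) s (s ^ m) a b
  have hconj := (signMatrix_semiconjBy_node lam s g (s ^ m) a b).sub_right
    (signMatrix_commute_pointDiagonal lam g ha ha' hne b b')
  rw [← hsign.mul_right_iff, ← hconj.eq, hsign.mul_left_iff]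
  exact isUnit_pointDiagonal_sub hlam ha ha' hne hb hb'

end Slices

section BlockColumns

open Polynomial

section Semiring

variable {α : Type*} [Semiring α] {ℓ : ℕ}

/-- The row vector whose entry at block `k` and inner index `z` is the `(i,k)` entry of the
`z`-th coefficient of `p`. -/
def coeffRow (t : ℕ) (p : (Matrix (Fin ℓ) (Fin ℓ) α)[X]) (i : Fin ℓ) : Fin (ℓ * t) → α :=
  fun σ => p.coeff σ.modNat i σ.divNat

theorem eq_zero_of_coeffRow_eq_zero {t : ℕ} {p : (Matrix (Fin ℓ) (Fin ℓ) α)[X]}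
    (hp : p.degree < t) (h : ∀ i, coeffRow t p i = 0) : p = 0 := by
  ext z i k
  rw [coeff_zero, Matrix.zero_apply]
  rcases lt_or_ge z t with hz | hz
  · have hentry := congrFun (h i) (finProdFinEquiv (k, ⟨z, hz⟩))
    have hindex : ((finProdFinEquiv (k, ⟨z, hz⟩)).divNat, (finProdFinEquiv (k, ⟨z, hz⟩)).modNat)
      = (k, ⟨z, hz⟩) := finProdFinEquiv.symm_apply_apply (k, (⟨z, hz⟩ : Fin t))
    obtain ⟨hblock, hinner⟩ := Prod.mk.inj hindex
    rwa [coeffRow, hblock, hinner] at hentry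
  · rw [degree_lt_iff_coeff_zero] at hp
    rw [hp z hz, Matrix.zero_apply]

/-- The rows of coefficients of `G, G * X, …, G * X ^ (r - 1)`, in each of the `ℓ` blocks. -/
noncomputable def shiftMatrix (t r : ℕ) (G : (Matrix (Fin ℓ) (Fin ℓ) α)[X]) :
    Matrix (Fin (ℓ * r)) (Fin (ℓ * t)) α :=
  Matrix.of fun ρ => coeffRow t (G * X ^ (ρ.modNat : ℕ)) ρ.divNat

end Semiring

variable {F : Type*} [Field F] {ℓ : ℕ}

theorem coeffRow_vecMul_Amat (lam : ℕ → F) (s g a b : ℕ) {t : ℕ}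
    {p : (Matrix (Fin ℓ) (Fin ℓ) F)[X]} (hp : p.degree < t) (i j : Fin ℓ) :
    (coeffRow t p i ᵥ* Amat lam s g ℓ a b t) j =
      (p * C (signMatrix F s ℓ a b)).eval (pointDiagonal lam s g ℓ a b) i j := by
  set S := signMatrix F s ℓ a b
  set D := pointDiagonal lam s g ℓ a b
  have hdeg : (p * C S).degree < t := by
    rw [degree_lt_iff_coeff_zero] at hp ⊢
    intro z hz
    rw [coeff_mul_C, hp z hz, zero_mul]
  calc (coeffRow t p i ᵥ* Amat lam s g ℓ a b t) j
      = ∑ x : Fin ℓ × Fin t, p.coeff x.2 i x.1 * (S * D ^ (x.2 : ℕ)) x.1 j := by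
        refine Fintype.sum_equiv finProdFinEquiv.symm _ _ fun σ => ?_
        rw [signMatrix_mul_pointDiagonal_pow_apply]
        rfl
    _ = (∑ z : Fin t, p.coeff z * (S * D ^ (z : ℕ))) i j := by
        simp only [Fintype.sum_prod_type_right, Matrix.sum_apply, Matrix.mul_apply]
    _ = (p * C S).eval D i j := by
        rw [eval_eq_sum, ← sum_fin (fun z c => c * D ^ z) (fun z => zero_mul _) hdeg]
        simp only [coeff_mul_C, mul_assoc]

variable {G : (Matrix (Fin ℓ) (Fin ℓ) F)[X]} {t r : ℕ}

theorem shiftMatrix_mul_Amat_apply (hG : G.natDegree + r ≤ t) (lam : ℕ → F) (s g a b : ℕ)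
    (ρ : Fin (ℓ * r)) (j : Fin ℓ) :
    (shiftMatrix t r G * Amat lam s g ℓ a b t) ρ j =
      (G * X ^ (ρ.modNat : ℕ) * C (signMatrix F s ℓ a b)).eval (pointDiagonal lam s g ℓ a b)
        ρ.divNat j := by
  have hnatDegree : (G * X ^ (ρ.modNat : ℕ)).natDegree ≤ G.natDegree + (ρ.modNat : ℕ) :=
    natDegree_mul_le_of_le le_rfl (natDegree_X_pow_le _)
  have hlt : G.natDegree + (ρ.modNat : ℕ) < t := by
    have := ρ.modNat.isLt
    omega
  have hdeg : (G * X ^ (ρ.modNat : ℕ)).degree < (t : WithBot ℕ) :=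
    (degree_le_of_natDegree_le hnatDegree).trans_lt (by exact_mod_cast hlt)
  exact coeffRow_vecMul_Amat lam s g a b hdeg ρ.divNat j

theorem shiftMatrix_mul_Amat_of_commute (hG : G.natDegree + r ≤ t) {lam : ℕ → F} {s g a b : ℕ}
    (hsign : Commute (C (signMatrix F s ℓ a b)) G)
    (hpoint : Commute (C (pointDiagonal lam s g ℓ a b)) G) :
    shiftMatrix t r G * Amat lam s g ℓ a b t =
      Amat lam s g ℓ a b r * G.eval (pointDiagonal lam s g ℓ a b) := by
  ext ρ j
  set S := signMatrix F s ℓ a b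
  set D := pointDiagonal lam s g ℓ a b
  have hshift : (G * X ^ (ρ.modNat : ℕ) * C S).eval D = S * D ^ (ρ.modNat : ℕ) * G.eval D :=
    calc (G * X ^ (ρ.modNat : ℕ) * C S).eval D
        = (C S * (G * X ^ (ρ.modNat : ℕ))).eval D := by
          rw [(hsign.mul_right (commute_X_pow (C S) _).symm).eq]
      _ = S * (G.eval D * D ^ (ρ.modNat : ℕ)) := by rw [eval_C_mul, eval_mul_X_pow]
      _ = S * D ^ (ρ.modNat : ℕ) * G.eval D := by
          rw [((commute_eval_self hpoint).pow_left _).symm.eq, mul_assoc]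
  rw [shiftMatrix_mul_Amat_apply hG, hshift, Matrix.mul_apply, Matrix.mul_apply]
  exact Finset.sum_congr rfl fun k _ => congrArg (· * _)
    (signMatrix_mul_pointDiagonal_pow_apply lam s g ℓ a b _ ρ.divNat k)

theorem shiftMatrix_one_mul_Amat (h : r ≤ t) (lam : ℕ → F) (s g a b : ℕ) :
    shiftMatrix t r (1 : (Matrix (Fin ℓ) (Fin ℓ) F)[X]) * Amat lam s g ℓ a b t =
      Amat lam s g ℓ a b r := by
  rw [shiftMatrix_mul_Amat_of_commute (by rwa [natDegree_one, zero_add])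
    (Commute.one_right _) (Commute.one_right _), eval_one, Matrix.mul_one]

theorem shiftMatrix_mul_Amat_eq_zero (hG : G.natDegree + r ≤ t) {lam : ℕ → F} {s g a b : ℕ}
    (hroot : G.eval (node lam s g ℓ a b) = 0) :
    shiftMatrix t r G * Amat lam s g ℓ a b t = 0 := by
  ext ρ j
  rw [shiftMatrix_mul_Amat_apply hG,
    eval_mul_C_of_semiconjBy _ (signMatrix_semiconjBy_node lam s g ℓ a b), eval_mul_X_pow, hroot,
    zero_mul, zero_mul]
  rfl

theorem isUnisolvent_node {lam : ℕ → F} {s g a : ℕ} {B : Finset ℕ}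
    (hdet : (AmatB lam s g ℓ a B.card B).det ≠ 0) :
    IsUnisolvent (fun j : Fin B.card => node lam s g ℓ a (enum B j)) B.card := by
  intro p hp hroot
  refine eq_zero_of_coeffRow_eq_zero hp fun i => Matrix.eq_zero_of_vecMul_eq_zero hdet ?_
  funext κ
  have hκ : (κ : ℕ) / ℓ < B.card := Nat.div_lt_of_lt_mul κ.2
  calc (coeffRow B.card p i ᵥ* AmatB lam s g ℓ a B.card B) κ
      = (coeffRow B.card p i ᵥ* Amat lam s g ℓ a (enum B (κ / ℓ)) B.card)
          (κ.cast (mul_comm _ _)).modNat := rfl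
    _ = 0 := by
      rw [coeffRow_vecMul_Amat _ _ _ _ _ hp,
        eval_mul_C_of_semiconjBy _ (signMatrix_semiconjBy_node lam s g ℓ a _),
        hroot ⟨(κ : ℕ) / ℓ, hκ⟩, zero_mul, Matrix.zero_apply]

theorem shiftMatrix_one_mul_AmatB (h : r ≤ t) (lam : ℕ → F) (s g a : ℕ) (B : Finset ℕ) :
    shiftMatrix t r (1 : (Matrix (Fin ℓ) (Fin ℓ) F)[X]) * AmatB lam s g ℓ a t B =
      AmatB lam s g ℓ a r B := by
  ext ρ κ
  exact congrFun₂ (shiftMatrix_one_mul_Amat h lam s g a (enum B (κ / ℓ))) ρ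
    (κ.cast (mul_comm _ _)).modNat

theorem shiftMatrix_mul_AmatB_eq_zero (hG : G.natDegree + r ≤ t) {lam : ℕ → F} {s g a : ℕ}
    {B : Finset ℕ} (hroot : ∀ j : Fin B.card, G.eval (node lam s g ℓ a (enum B j)) = 0) :
    shiftMatrix t r G * AmatB lam s g ℓ a t B = 0 := by
  ext ρ κ
  exact congrFun₂ (shiftMatrix_mul_Amat_eq_zero hG
    (hroot ⟨(κ : ℕ) / ℓ, Nat.div_lt_of_lt_mul κ.2⟩)) ρ (κ.cast (mul_comm _ _)).modNat

end BlockColumns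

section Stacking

variable {α ν : Type*} {p q r : ℕ}

/-- The matrix with `U` on top of `W`. -/
def stackRows (h : p + q = r) (U : Matrix (Fin p) ν α) (W : Matrix (Fin q) ν α) :
    Matrix (Fin r) ν α :=
  Matrix.of fun ρ j =>
    if hρ : (ρ : ℕ) < p then U ⟨ρ, hρ⟩ j else W ⟨ρ - p, by omega⟩ j

theorem mul_add_mul_sub (ℓ : ℕ) {v t : ℕ} (h : v ≤ t) : ℓ * v + ℓ * (t - v) = ℓ * t := by
  rw [← mul_add, Nat.add_sub_of_le h]

theorem stackRows_mul {μ : Type*} [Fintype ν] [NonUnitalNonAssocSemiring α] (h : p + q = r)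
    (U : Matrix (Fin p) ν α) (W : Matrix (Fin q) ν α) (A : Matrix ν μ α) :
    stackRows h U W * A = stackRows h (U * A) (W * A) := by
  ext ρ j
  simp only [stackRows, Matrix.mul_apply, Matrix.of_apply]
  split_ifs <;> rfl

end Stacking

theorem enum_mem_s8 {B : Finset ℕ} {m : ℕ} (hm : m < B.card) : enum B m ∈ B := by
  rw [← B.length_sort (· ≤ ·)] at hm
  rw [enum, List.getD_eq_getElem _ _ hm]
  exact (Finset.mem_sort (· ≤ ·)).mp (List.getElem_mem hm)

theorem exists_nat_extension {F : Type*} [Zero F] {p q : ℕ} (A : Matrix (Fin p) (Fin q) F) :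
    ∃ f : ℕ → ℕ → F, (Matrix.of fun i j => f i j : Matrix (Fin p) (Fin q) F) = A :=
  ⟨fun x y => if h : x < p ∧ y < q then A ⟨x, h.1⟩ ⟨y, h.2⟩ else 0,
    Matrix.ext fun i j => dif_pos ⟨i.2, j.2⟩⟩

theorem statement8_general {F : Type*} [Field F] {lam : ℕ → F} {s g m : ℕ}
    (hlam : Set.InjOn lam (Set.Iio (m * s * g))) {a : ℕ} (ha : a < m) {B : Finset ℕ}
    (hB : B ⊆ Finset.range g) (hdet : (AmatB lam s g (s ^ m) a B.card B).det ≠ 0) {t : ℕ}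
    (ht : B.card ≤ t) :
    ∃ M : Matrix (Fin (s ^ m * t)) (Fin (s ^ m * t)) F,
      M * AmatB lam s g (s ^ m) a t B =
        stackRows (mul_add_mul_sub (s ^ m) ht) (AmatB lam s g (s ^ m) a B.card B) 0 ∧
      ∀ a' < m, a' ≠ a → ∀ b < g, ∃ Q : Matrix (Fin (s ^ m)) (Fin (s ^ m)) F, IsUnit Q ∧
        M * Amat lam s g (s ^ m) a' b t =
          stackRows (mul_add_mul_sub (s ^ m) ht) (Amat lam s g (s ^ m) a' b B.card)
            (Amat lam s g (s ^ m) a' b (t - B.card) * Q) := by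
  have hx := isUnisolvent_node hdet
  obtain ⟨G, hG⟩ := hx.exists_isNodal
  have hsize : G.natDegree + (t - B.card) ≤ t := by
    have := hG.natDegree_le
    omega
  refine ⟨stackRows (mul_add_mul_sub (s ^ m) ht) (shiftMatrix t B.card 1)
    (shiftMatrix t (t - B.card) G), ?_, fun a' ha' hne b hb =>
      ⟨G.eval (pointDiagonal lam s g (s ^ m) a' b), ?_, ?_⟩⟩
  · rw [stackRows_mul, shiftMatrix_one_mul_AmatB ht,
      shiftMatrix_mul_AmatB_eq_zero hsize hG.eval_eq_zero]
  · exact hG.isUnit_eval hx (fun j => pointDiagonal_commute_node lam g ha ha' hne _ b) fun j =>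
      isUnit_node_sub_pointDiagonal hlam ha ha' hne (Finset.mem_range.mp (hB (enum_mem_s8 j.2))) hb
  · rw [stackRows_mul, shiftMatrix_one_mul_Amat ht, shiftMatrix_mul_Amat_of_commute hsize
      (hG.commute_C hx fun j => signMatrix_commute_node lam g ha ha' hne _ b)
      (hG.commute_C hx fun j => pointDiagonal_commute_node lam g ha ha' hne _ b)]

/-- Lemma 7 of the paper: for `a ∈ [n/s]`, nonempty `B ⊆ [s]` with
`|B| = v < t`, under the local constraints there is an `ℓt × ℓt` matrix `M` such that
(i) `M · A_{a,B}^{(t)}` is `A_{a,B}^{(v)}` stacked over a zero matrix, and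
(ii) for all `a < a' < n/s` and `b ∈ [s]`, `M · A_{a',b}^{(t)}` is `A_{a',b}^{(v)}` stacked
over a matrix `Â = A_{a',b}^{(t−v)} · Q` with `Q` invertible (so `Â` is column equivalent
to `A_{a',b}^{(t−v)}`). -/
theorem statement8 (F : Type*) [Field F] [Fintype F] (n k d s ℓ : ℕ)
    (hk : 1 ≤ k) (hkn : k < n) (hd₁ : k + 1 ≤ d) (hd₂ : d ≤ n - 1)
    (hs : s = d - k + 1) (hdiv : s ∣ n) (hℓ : ℓ = s ^ (n / s))
    (lam : ℕ → F)
    (hdist : ∀ i < n * s, ∀ j < n * s, lam i = lam j → i = j)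
    (hloc : LocalConstraints lam s s ℓ (n / s))
    (a : ℕ) (ha : a < n / s)
    (B : Finset ℕ) (hBsub : B ⊆ Finset.range s) (hBne : B.Nonempty)
    (t : ℕ) (ht : B.card < t) :
    ∃ M : Matrix (Fin (ℓ * t)) (Fin (ℓ * t)) F,
      (∀ (ρ : Fin (ℓ * t)) (κ : Fin (ℓ * B.card)),
        (M * AmatB lam s s ℓ a t B) ρ κ =
          if (ρ : ℕ) < ℓ * B.card then
            Aent lam s s a (enum B ((κ : ℕ) / ℓ)) ((ρ : ℕ) / B.card) ((κ : ℕ) % ℓ)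
              ((ρ : ℕ) % B.card)
          else 0) ∧
      (∀ a', a < a' → a' < n / s → ∀ b < s,
        ∃ Q : Matrix (Fin ℓ) (Fin ℓ) F, IsUnit Q ∧
          ∃ Abot : ℕ → ℕ → F,
            (Matrix.of (fun (p : Fin (ℓ * (t - B.card))) (j : Fin ℓ) =>
                Abot (p : ℕ) (j : ℕ)) = Amat lam s s ℓ a' b (t - B.card) * Q) ∧
            ∀ (ρ : Fin (ℓ * t)) (j : Fin ℓ),
              (M * Amat lam s s ℓ a' b t) ρ j =
                if (ρ : ℕ) < ℓ * B.card then
                  Aent lam s s a' b ((ρ : ℕ) / B.card) (j : ℕ) ((ρ : ℕ) % B.card)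
                else Abot ((ρ : ℕ) - ℓ * B.card) (j : ℕ)) := by
  subst hℓ
  have hlam : Set.InjOn lam (Set.Iio (n / s * s * s)) := by
    rw [Nat.div_mul_cancel hdiv]
    exact fun i hi j hj => hdist i hi j hj
  obtain ⟨M, hMB, hM⟩ := statement8_general hlam ha hBsub (hloc a ha B hBsub hBne) ht.le
  refine ⟨M, fun ρ κ => congrFun₂ hMB ρ κ, fun a' haa' ha' b hb => ?_⟩
  obtain ⟨Q, hQ, hMQ⟩ := hM a' ha' haa'.ne' b hb
  obtain ⟨Abot, hAbot⟩ := exists_nat_extension (Amat lam s s (s ^ (n / s)) a' b (t - B.card) * Q)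
  rw [← hAbot] at hMQ
  exact ⟨Q, hQ, Abot, hAbot, fun ρ j => congrFun₂ hMQ ρ j⟩
end

section
/- Let g ≠ h be two indices in {0,…,n/s−1}, let π be the permutation of {0,…,ℓ−1} that exchanges the g-th and h-th base-s digits of its argument, and let P be the ℓ × ℓ permutation matrix with P(i,j) = 1 if and only if j = π(i). Let λ̂_0, …, λ̂_{ns−1} be obtained from λ_0, …, λ_{ns−1} by exchanging λ_{gs^2+m} with λ_{hs^2+m} for every m ∈ {0,…,s^2−1}, and let Ĉ be the array code defined exactly as C but with the λ̂_i in place of the λ_i. If (C_0, …, C_{n−1}) ∈ C, then (D_0, …, D_{n−1}) ∈ Ĉ, where D_{gs+b} = P·C_{hs+b} and D_{hs+b} = P·C_{gs+b} for every b ∈ {0,…,s−1}, and D_{as+b} = P·C_{as+b} for every a ∉ {g,h} and b ∈ {0,…,s−1}. In particular C and Ĉ are permutation equivalent. -/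
open Matrix

/-- The permutation `π_{g,h}` of `ℕ` exchanging the `g`-th and `h`-th base-`s` digits. -/
def swapDigits (s g h i : ℕ) : ℕ :=
  i - digit s i g * s ^ g - digit s i h * s ^ h + digit s i h * s ^ g + digit s i g * s ^ h

/-- `λ̂`: the sequence obtained from `λ` by exchanging `λ_{gs²+m}` with `λ_{hs²+m}` for
every `m ∈ [s²]`. -/
def lamHat {F : Type*} [Field F] (lam : ℕ → F) (s g h i : ℕ) : F :=
  if g * s ^ 2 ≤ i ∧ i < g * s ^ 2 + s ^ 2 then lam (h * s ^ 2 + (i - g * s ^ 2))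
  else if h * s ^ 2 ≤ i ∧ i < h * s ^ 2 + s ^ 2 then lam (g * s ^ 2 + (i - h * s ^ 2))
  else lam i

/-!
An entry of `A_{a,b}` in block position `(i, j)` depends only on the `a`-th digits of `i` and `j`,
on whether their other digits agree, and on the `λ`'s of group `a`. Hence moving the digits of
both `i` and `j` along a permutation `σ` of the digit positions turns `A_{a,b}` into
`A_{σ a, b}`, up to replacing the `λ`'s of one group by those of the other. Reindexing block rows,
block columns and groups by `σ` therefore carries the parity check equations of one code to those
of the other. This works for every `σ`; the theorem is the case of a transposition.
-/

lemma mul_add_div_of_lt (a : ℕ) {b n : ℕ} (hb : b < n) : (a * n + b) / n = a := by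
  rw [Nat.mul_comm, Nat.mul_add_div (b.zero_le.trans_lt hb), Nat.div_eq_of_lt hb, add_zero]

lemma forall_lt_mul_div_mod_iff (m n : ℕ) (P : ℕ → ℕ → Prop) :
    (∀ x < m * n, P (x / n) (x % n)) ↔ ∀ (a : Fin m) (b : Fin n), P a b := by
  rw [← Prod.forall (p := fun x : Fin m × Fin n => P x.1 x.2),
    ← finProdFinEquiv.symm.forall_congr_right, Fin.forall_iff]
  rfl

lemma sum_range_mul_div_mod {M : Type*} [AddCommMonoid M] (m n : ℕ) (f : ℕ → ℕ → M) :
    ∑ x ∈ Finset.range (m * n), f (x / n) (x % n) = ∑ a : Fin m, ∑ b : Fin n, f a b := by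
  rw [Finset.sum_range, ← Fintype.sum_prod_type' (f := fun (a : Fin m) (b : Fin n) => f a b),
    ← finProdFinEquiv.symm.sum_comp]
  rfl

/-- The permutation of `{0, …, s ^ N - 1}` that moves the base-`s` digit of its argument in
position `u` to position `σ u`, for every `u < N`. For a transposition of two positions it is
the permutation `π` of the paper, see `swapDigits_eq_permDigits`. -/
def permDigits {s N : ℕ} (σ : Equiv.Perm (Fin N)) : Equiv.Perm (Fin (s ^ N)) :=
  finFunctionFinEquiv.permCongr (σ.arrowCongr (Equiv.refl (Fin s)))

section Digits

variable {s N : ℕ}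

lemma sum_digit_mul_pow (i : Fin (s ^ N)) : ∑ u : Fin N, digit s i u * s ^ (u : ℕ) = i :=
  congrArg Fin.val (finFunctionFinEquiv.apply_symm_apply i)

lemma digit_eq_zero_of_lt_pow {i u : ℕ} (hi : i < s ^ u) : digit s i u = 0 := by
  rw [digit, Nat.div_eq_of_lt hi, Nat.zero_mod]

lemma forall_ne_digit_eq_iff (a : Fin N) (i j : Fin (s ^ N)) :
    (∀ u : ℕ, u ≠ a → digit s i u = digit s j u) ↔
      ∀ u : Fin N, u ≠ a → digit s i u = digit s j u := by
  refine ⟨fun H u hu => H u (Fin.val_ne_of_ne hu), fun H u hu => ?_⟩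
  rcases lt_or_ge u N with huN | huN
  · exact H ⟨u, huN⟩ (Fin.ne_of_val_ne hu)
  · have hs : 0 < s := (finFunctionFinEquiv.symm i a).pos
    have hpow : s ^ N ≤ s ^ u := Nat.pow_le_pow_right hs huN
    rw [digit_eq_zero_of_lt_pow (i.isLt.trans_le hpow),
      digit_eq_zero_of_lt_pow (j.isLt.trans_le hpow)]

lemma digit_permDigits_apply (σ : Equiv.Perm (Fin N)) (i : Fin (s ^ N)) (u : Fin N) :
    digit s (permDigits σ i) (σ u) = digit s i u := by
  have h : finFunctionFinEquiv.symm (permDigits σ i) (σ u) = finFunctionFinEquiv.symm i u := by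
    simp [permDigits, Equiv.permCongr_apply]
  exact congrArg Fin.val h

lemma forall_ne_digit_permDigits_eq_iff (σ : Equiv.Perm (Fin N)) (a : Fin N)
    (i j : Fin (s ^ N)) :
    (∀ u : ℕ, u ≠ σ a → digit s (permDigits σ i) u = digit s (permDigits σ j) u) ↔
      ∀ u : ℕ, u ≠ a → digit s i u = digit s j u := by
  simp only [forall_ne_digit_eq_iff, ← σ.forall_congr_right (q := fun u => u ≠ σ a → _),
    σ.injective.ne_iff, digit_permDigits_apply]

lemma swapDigits_eq_permDigits {g h : Fin N} (hgh : g ≠ h) (i : Fin (s ^ N)) :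
    swapDigits s g h i = permDigits (Equiv.swap g h) i := by
  have split_sum (f : Fin N → ℕ) : f g + f h + ∑ u ∈ {g, h}ᶜ, f u = ∑ u, f u := by
    rw [← Finset.sum_pair hgh, Finset.sum_add_sum_compl]
  have digit_g : digit s (permDigits (Equiv.swap g h) i) g = digit s i h := by
    simpa using digit_permDigits_apply (Equiv.swap g h) i h
  have digit_h : digit s (permDigits (Equiv.swap g h) i) h = digit s i g := by
    simpa using digit_permDigits_apply (Equiv.swap g h) i g
  have digit_other : ∀ u ∈ ({g, h}ᶜ : Finset (Fin N)),
      digit s (permDigits (Equiv.swap g h) i) u * s ^ (u : ℕ) = digit s i u * s ^ (u : ℕ) := by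
    intro u hu
    simp only [Finset.mem_compl, Finset.mem_insert, Finset.mem_singleton, not_or] at hu
    have digit_u := digit_permDigits_apply (Equiv.swap g h) i u
    rw [Equiv.swap_apply_of_ne_of_ne hu.1 hu.2] at digit_u
    rw [digit_u]
  have sum_i := sum_digit_mul_pow i
  have sum_perm := sum_digit_mul_pow (permDigits (Equiv.swap g h) i)
  rw [← split_sum] at sum_i sum_perm
  rw [digit_g, digit_h, Finset.sum_congr rfl digit_other] at sum_perm
  -- `sum_i` bounds both subtracted terms, so the subtractions in `swapDigits` do not truncate.
  unfold swapDigits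
  omega

end Digits

section Code

variable {F : Type*} [Field F] {lam lam' : ℕ → F}

lemma inCode_iff (s G ℓ r N : ℕ) (C : ℕ → ℕ → F) :
    InCode lam s G ℓ r (N * G) C ↔ ∀ (i : Fin ℓ) (z : Fin r),
      ∑ a : Fin N, ∑ b : Fin G, ∑ j : Fin ℓ, Aent lam s G a b i j z * C (a * G + b) j = 0 := by
  have sum_nodes (i z : ℕ) :
      ∑ m ∈ Finset.range (N * G), ∑ j ∈ Finset.range ℓ,
          Aent lam s G (m / G) (m % G) i j z * C m j =
        ∑ a : Fin N, ∑ b : Fin G, ∑ j : Fin ℓ, Aent lam s G a b i j z * C (a * G + b) j := by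
    rw [← sum_range_mul_div_mod N G fun a b =>
      ∑ j : Fin ℓ, Aent lam s G a b i j z * C (a * G + b) j]
    simp only [Nat.div_add_mod', Finset.sum_range]
  simp only [InCode, sum_nodes]
  exact forall_lt_mul_div_mod_iff ℓ r fun i z =>
    ∑ a : Fin N, ∑ b : Fin G, ∑ j : Fin ℓ, Aent lam s G a b i j z * C (a * G + b) j = 0

lemma Aent_permDigits {s N G : ℕ} {σ : Equiv.Perm (Fin N)} {a : Fin N} {b : ℕ}
    (hlam : ∀ c < s, lam' (a * s * G + b * s + c) = lam (σ a * s * G + b * s + c))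
    (i j : Fin (s ^ N)) (z : ℕ) :
    Aent lam s G (σ a) b (permDigits σ i) (permDigits σ j) z = Aent lam' s G a b i j z := by
  have hdigit : digit s j a < s := (finFunctionFinEquiv.symm j a).isLt
  have val_eq_iff : (permDigits σ i : ℕ) = permDigits σ j ↔ (i : ℕ) = j := by
    rw [Fin.val_inj, Fin.val_inj, (permDigits σ).injective.eq_iff]
  classical
  simp only [Aent, val_eq_iff, digit_permDigits_apply, forall_ne_digit_permDigits_eq_iff,
    hlam _ hdigit]

lemma inCode_permDigits_iff {s N G r : ℕ} (σ : Equiv.Perm (Fin N))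
    (hlam : ∀ (a : Fin N), ∀ b < G, ∀ c < s,
      lam' (a * s * G + b * s + c) = lam (σ a * s * G + b * s + c))
    {C D : ℕ → ℕ → F} (hD : ∀ (a : Fin N) (b : Fin G) (j : Fin (s ^ N)),
      D (a * G + b) j = C (σ a * G + b) (permDigits σ j)) :
    InCode lam' s G (s ^ N) r (N * G) D ↔ InCode lam s G (s ^ N) r (N * G) C := by
  have parity_check_eq (i : Fin (s ^ N)) (z : Fin r) :
      ∑ a : Fin N, ∑ b : Fin G, ∑ j : Fin (s ^ N),
          Aent lam' s G a b i j z * D (a * G + b) j =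
        ∑ a : Fin N, ∑ b : Fin G, ∑ j : Fin (s ^ N),
          Aent lam s G a b (permDigits σ i) j z * C (a * G + b) j := by
    refine Fintype.sum_equiv σ _ _ fun a => Finset.sum_congr rfl fun b _ =>
      Fintype.sum_equiv (permDigits σ) _ _ fun j => ?_
    rw [Aent_permDigits (hlam a b b.isLt), hD]
  rw [inCode_iff, inCode_iff]
  exact (permDigits σ).forall_congr fun i => forall_congr' fun z => by rw [parity_check_eq]

lemma lamHat_mul_add {s : ℕ} (g h a : ℕ) {m : ℕ} (hm : m < s ^ 2) :
    lamHat lam s g h (a * s ^ 2 + m) = lam (Equiv.swap g h a * s ^ 2 + m) := by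
  have mem_block_iff (x : ℕ) :
      x * s ^ 2 ≤ a * s ^ 2 + m ∧ a * s ^ 2 + m < x * s ^ 2 + s ^ 2 ↔ a = x := by
    have hs : 0 < s ^ 2 := m.zero_le.trans_lt hm
    conv_rhs => rw [← mul_add_div_of_lt a hm, Nat.div_eq_iff hs]
    omega
  simp only [lamHat, mem_block_iff, Equiv.swap_apply_def]
  split_ifs with hag hah
  · rw [hag, Nat.add_sub_cancel_left]
  · rw [hah, Nat.add_sub_cancel_left]
  · rfl

end Code

theorem statement10_general {F : Type*} [Field F] (n s ℓ r : ℕ) (hdiv : s ∣ n)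
    (hℓ : ℓ = s ^ (n / s)) (lam : ℕ → F) (g h : ℕ) (hg : g < n / s) (hh : h < n / s)
    (hgh : g ≠ h) (C : ℕ → ℕ → F) :
    InCode (fun i => lamHat lam s g h i) s s ℓ r n
      (fun m j =>
        C (if m / s = g then h * s + m % s else if m / s = h then g * s + m % s else m)
          (swapDigits s g h j)) ↔
      InCode lam s s ℓ r n C := by
  generalize hN : n / s = N at hg hh hℓ
  obtain rfl : n = N * s := by rw [← hN, Nat.div_mul_cancel hdiv]
  subst hℓ
  have val_swap (a : Fin N) :
      (Equiv.swap ⟨g, hg⟩ ⟨h, hh⟩ a : Fin N).val = Equiv.swap g h a :=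
    Fin.val_injective.map_swap ..
  refine inCode_permDigits_iff (Equiv.swap ⟨g, hg⟩ ⟨h, hh⟩) ?_ ?_
  · intro a b hb c hc
    have hm : b * s + c < s ^ 2 := by nlinarith
    simpa only [val_swap, mul_assoc, add_assoc, ← pow_two] using lamHat_mul_add g h a hm
  · intro a b j
    have hswap := swapDigits_eq_permDigits (g := ⟨g, hg⟩) (h := ⟨h, hh⟩) (by simpa using hgh) j
    rw [mul_add_div_of_lt _ b.isLt, Nat.mul_add_mod_of_lt b.isLt, ← hswap, val_swap,
      Equiv.swap_apply_def]
    split_ifs <;> rfl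

/-- Appendix A of the paper: if `(C_0, …, C_{n−1})` is a codeword of `C`,
then the tuple `(D_0, …, D_{n−1})` obtained by exchanging the nodes of groups `g` and `h`
and applying the digit-swapping permutation matrix `P` to every node
(`D_{gs+b} = P·C_{hs+b}`, `D_{hs+b} = P·C_{gs+b}`, `D_{as+b} = P·C_{as+b}` otherwise,
where `(P·v)(i) = v(π_{g,h}(i))`) is a codeword of the code `Ĉ` defined with the exchanged
values `λ̂`; in particular `C` and `Ĉ` are permutation equivalent. -/
theorem statement10 (F : Type*) [Field F] [Fintype F] (n k d s ℓ r : ℕ)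
    (hk : 1 ≤ k) (hkn : k < n) (hd₁ : k + 1 ≤ d) (hd₂ : d ≤ n - 1)
    (hs : s = d - k + 1) (hdiv : s ∣ n) (hℓ : ℓ = s ^ (n / s)) (hr : r = n - k)
    (lam : ℕ → F)
    (g h : ℕ) (hg : g < n / s) (hh : h < n / s) (hgh : g ≠ h)
    (C : ℕ → ℕ → F) (hC : InCode lam s s ℓ r n C) :
    InCode (fun i => lamHat lam s g h i) s s ℓ r n
      (fun m j =>
        C (if m / s = g then h * s + m % s else if m / s = h then g * s + m % s else m)
          (swapDigits s g h j)) :=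
  (statement10_general n s ℓ r hdiv hℓ lam g h hg hh hgh C).2 hC
end
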